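/- arXiv:2307.07271 — 3 statements merged into one kernel-verified Lean document; each statement's English description precedes it below -/
import Mathlib

section
/- Let G be an n-vertex finite simple graph with average degree d̄ ≥ 1 and m = n·d̄/2 edges, let C > 1, and let L = {v ∈ V(G) : deg(v) < C·d̄}. Assume vol(L) ≥ (1+γ)·m for some γ > 0, and that ϑ := (C·d̄)^10 / n < (1/2)·(1 − 1/C). Then q*(G) ≥ (0.26/√(C·d̄))·(γ − 2ϑ/(C·d̄)) − ϑ²/(2·d̄²) − 3/(8·√n) − 4·Δ(G)²/(n²·d̄²), where Δ(G) is the maximum degree of G. -/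
/-! Modularity of bipartitions is a quadratic form: if `B` is `2m` times the modularity matrix, so
`B u v = 2m [u ~ v] - d_u d_v`, then the two level sets of a sign vector `s` have modularity score
`sᵀ B s / (8 m²)` (`qf_le_modularity`). It therefore suffices to find one good sign vector.

Sign vectors found separately on disjoint vertex sets can be glued without loss, because flipping
all signs on one set negates the cross terms (`exists_sign_union`). Write `D = C dbar`. The vertex
set is cut into three ranges of degrees.

* On `L`, where degrees are below `D`, attach to `v` the unit vector proportional to
  `e_v + D^(-1/2) ∑ e_w`, the sum over the neighbours `w` of `v` in `L`, and take the signs of the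
  inner products with a standard Gaussian vector. All inner products of these vectors are
  nonnegative, those along edges are at least `D^(-1/2)`, and those of vertices that are neither
  adjacent nor joined by a path of length two vanish. The expected product of the signs of two
  standard Gaussian variables with correlation `ρ ≥ 0` is at least `2ρ/π`
  (`IsStdPair.sgn_corr`), and it is zero when `ρ = 0`. Hence each edge inside `L` contributes about
  `2m (2/π) D^(-1/2)` per orientation, and the negative terms are sparse (`exists_sign_low`).
* On the remaining vertices of degree below `√(2m)`, gluing single vertices leaves only the diagonal
  loss `∑ d²`, which is at most `√(2m) ∑ d` (`exists_sign_diag`).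
* The vertices of degree at least `√(2m)` are paired in decreasing order of degree with opposite
  signs. Squared degree differences add up to at most `Δ²`, and each vertex loses at most `2m`, which
  is again at most `√(2m)` times its degree (`exists_sign_high`).

At least `γ m` edges lie inside `L`, and the smallness hypothesis on `ϑ` amounts to
`D ^ 11 ≤ m (D - 1)`, which makes the loss on `L` negligible. Adding up gives
`0.26 γ / √D - 3 / (8 √(2m)) - Δ² / (8 m²)` (`modularity_ge`), which is at least the claimed bound.
-/

open Finset

/-- Number of edges of `G` with both endpoints in `A` (ordered pairs divided by two). -/
noncomputable def edgeCount {V : Type*} [Fintype V] [DecidableEq V]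
    (G : SimpleGraph V) [DecidableRel G.Adj] (A : Finset V) : ℝ :=
  ((Finset.univ.filter (fun p : V × V => G.Adj p.1 p.2 ∧ p.1 ∈ A ∧ p.2 ∈ A)).card : ℝ) / 2

/-- The volume of a vertex set: the sum of the degrees of its vertices. -/
noncomputable def vol {V : Type*} [Fintype V] [DecidableEq V]
    (G : SimpleGraph V) [DecidableRel G.Adj] (A : Finset V) : ℝ :=
  ∑ v ∈ A, (G.degree v : ℝ)

/-- The modularity score of a vertex partition. -/
noncomputable def modularityScore {V : Type*} [Fintype V] [DecidableEq V]
    (G : SimpleGraph V) [DecidableRel G.Adj]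
    (P : Finpartition (Finset.univ : Finset V)) : ℝ :=
  ∑ A ∈ P.parts,
    (edgeCount G A / (G.edgeFinset.card : ℝ)
      - (vol G A / (2 * (G.edgeFinset.card : ℝ))) ^ 2)

/-- The modularity of a graph: the maximum modularity score over all vertex partitions. -/
noncomputable def modularity {V : Type*} [Fintype V] [DecidableEq V]
    (G : SimpleGraph V) [DecidableRel G.Adj] : ℝ :=
  ⨆ P : Finpartition (Finset.univ : Finset V), modularityScore G P

/-! ### Signs of correlated Gaussian variables -/

section GaussianPart

open MeasureTheory ProbabilityTheory

/-- Two random variables form a standard Gaussian pair with correlation `ρ`, expressed through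
their joint characteristic function. -/
def IsStdPair {Ω : Type*} [MeasurableSpace Ω] (P : Measure Ω) (X Y : Ω → ℝ) (ρ : ℝ) : Prop :=
  ∀ s t : ℝ, ∫ ω, Complex.exp (((s * X ω + t * Y ω : ℝ) : ℂ) * Complex.I) ∂P =
    Complex.exp ((-(s ^ 2 + 2 * ρ * s * t + t ^ 2) / 2 : ℝ) : ℂ)

lemma IsStdPair.map_eq {Ω Ω' : Type*} [MeasurableSpace Ω] [MeasurableSpace Ω']
    {P : Measure Ω} {P' : Measure Ω'} [IsProbabilityMeasure P] [IsProbabilityMeasure P']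
    {X Y : Ω → ℝ} {X' Y' : Ω' → ℝ} {ρ : ℝ}
    (hX : Measurable X) (hY : Measurable Y) (hX' : Measurable X') (hY' : Measurable Y')
    (h : IsStdPair P X Y ρ) (h' : IsStdPair P' X' Y' ρ) :
    P.map (fun ω => WithLp.toLp 2 (X ω, Y ω)) = P'.map (fun ω => WithLp.toLp 2 (X' ω, Y' ω)) := by
  have hm : Measurable (fun ω => WithLp.toLp 2 (X ω, Y ω)) := by fun_prop
  have hm' : Measurable (fun ω => WithLp.toLp 2 (X' ω, Y' ω)) := by fun_prop
  have := Measure.isProbabilityMeasure_map (μ := P) hm.aemeasurable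
  have := Measure.isProbabilityMeasure_map (μ := P') hm'.aemeasurable
  apply Measure.ext_of_charFun
  ext t
  rw [charFun_apply, charFun_apply, integral_map hm.aemeasurable (by fun_prop),
    integral_map hm'.aemeasurable (by fun_prop)]
  have e := (h t.fst t.snd).trans (h' t.fst t.snd).symm
  simpa [WithLp.prod_inner_apply] using e

/-- Expectations of functions of a standard Gaussian pair depend only on the correlation. -/
lemma IsStdPair.integral_eq {Ω Ω' : Type*} [MeasurableSpace Ω] [MeasurableSpace Ω']
    {P : Measure Ω} {P' : Measure Ω'} [IsProbabilityMeasure P] [IsProbabilityMeasure P']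
    {X Y : Ω → ℝ} {X' Y' : Ω' → ℝ} {ρ : ℝ}
    (hX : Measurable X) (hY : Measurable Y) (hX' : Measurable X') (hY' : Measurable Y')
    (h : IsStdPair P X Y ρ) (h' : IsStdPair P' X' Y' ρ)
    (F : ℝ → ℝ → ℝ) (hF : Measurable (fun p : ℝ × ℝ => F p.1 p.2)) :
    ∫ ω, F (X ω) (Y ω) ∂P = ∫ ω, F (X' ω) (Y' ω) ∂P' := by
  have hm : Measurable (fun ω => WithLp.toLp 2 (X ω, Y ω)) := by fun_prop
  have hm' : Measurable (fun ω => WithLp.toLp 2 (X' ω, Y' ω)) := by fun_prop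
  have hG : Measurable (fun p : WithLp 2 (ℝ × ℝ) => F p.fst p.snd) :=
    hF.comp (WithLp.measurable_ofLp 2 (ℝ × ℝ))
  have e1 := integral_map (μ := P) hm.aemeasurable hG.aestronglyMeasurable
  have e2 := integral_map (μ := P') hm'.aemeasurable hG.aestronglyMeasurable
  rw [h.map_eq hX hY hX' hY' h'] at e1
  exact e1.symm.trans e2

/-- The standard Gaussian measure on the line. -/
noncomputable abbrev stdG : Measure ℝ := gaussianReal 0 1

lemma stdG_char (p : ℝ) :
    ∫ x, Complex.exp (((p * x : ℝ) : ℂ) * Complex.I) ∂stdG = Complex.exp ((-p ^ 2 / 2 : ℝ) : ℂ) := by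
  have := charFun_gaussianReal (μ := 0) (v := 1) p
  rw [charFun_apply_real] at this
  push_cast
  rw [this]
  congr 1
  simp
  ring

lemma stdG_char2 (p q : ℝ) :
    ∫ x, Complex.exp (((p * x.1 + q * x.2 : ℝ) : ℂ) * Complex.I) ∂(stdG.prod stdG) =
      Complex.exp ((-(p ^ 2 + q ^ 2) / 2 : ℝ) : ℂ) := by
  rw [show (-(p ^ 2 + q ^ 2) / 2 : ℝ) = -p ^ 2 / 2 + -q ^ 2 / 2 by ring, Complex.ofReal_add,
    Complex.exp_add, ← stdG_char p, ← stdG_char q, ← integral_prod_mul]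
  congr with x
  rw [← Complex.exp_add, ← add_mul, ← Complex.ofReal_add]

lemma stdG_char3 (p q r : ℝ) :
    ∫ x, Complex.exp (((p * x.1 + (q * x.2.1 + r * x.2.2) : ℝ) : ℂ) * Complex.I)
      ∂(stdG.prod (stdG.prod stdG)) =
      Complex.exp ((-(p ^ 2 + (q ^ 2 + r ^ 2)) / 2 : ℝ) : ℂ) := by
  rw [show (-(p ^ 2 + (q ^ 2 + r ^ 2)) / 2 : ℝ) = -p ^ 2 / 2 + -(q ^ 2 + r ^ 2) / 2 by ring,
    Complex.ofReal_add, Complex.exp_add, ← stdG_char p, ← stdG_char2 q r, ← integral_prod_mul]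
  congr with x
  rw [← Complex.exp_add, ← add_mul, ← Complex.ofReal_add]

/-- The sign function with values in `{1, -1}` (the value at `0` is `1`). -/
noncomputable def sgn (x : ℝ) : ℝ := if 0 ≤ x then 1 else -1

lemma sgn_eq_or (x : ℝ) : sgn x = 1 ∨ sgn x = -1 := by
  unfold sgn; split_ifs <;> simp

lemma abs_sgn (x : ℝ) : |sgn x| = 1 := by
  unfold sgn; split_ifs <;> norm_num

lemma sgn_mul (x : ℝ) : sgn x * x = |x| := by
  unfold sgn; split_ifs with h
  · rw [abs_of_nonneg h, one_mul]
  · rw [abs_of_neg (not_le.mp h)]; ring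

@[fun_prop]
lemma measurable_sgn : Measurable sgn :=
  Measurable.ite measurableSet_Ici measurable_const measurable_const

lemma integrable_id_stdG : Integrable (fun x : ℝ => x) stdG :=
  (memLp_id_gaussianReal' 1 (by simp)).integrable le_rfl

lemma integrable_sq_stdG : Integrable (fun x : ℝ => x ^ 2) stdG :=
  (memLp_id_gaussianReal' (μ := 0) (v := 1) 2 (by simp)).integrable_sq

lemma integral_sq_stdG : ∫ x, x ^ 2 ∂stdG = 1 := by
  have h := variance_id_gaussianReal (μ := 0) (v := 1)
  rw [variance_eq_integral aemeasurable_id] at h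
  simpa using h

lemma integral_sgn_stdG : ∫ x, sgn x ∂stdG = 0 := by
  have hmap : stdG.map (fun x => -x) = stdG := by simp [gaussianReal_map_neg]
  have h1 : ∫ x, sgn x ∂stdG = ∫ x, sgn (-x) ∂stdG := by
    conv_lhs => rw [← hmap]
    rw [integral_map (by fun_prop) (by fun_prop)]
  have : NullSingletonClass stdG := nullSingletonClass_gaussianReal one_ne_zero
  have h2 : ∫ x, sgn (-x) ∂stdG = ∫ x, - sgn x ∂stdG := by
    refine integral_congr_ae ?_
    have h0 : ∀ᵐ x ∂stdG, x ≠ 0 := by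
      simp [ae_iff]
    filter_upwards [h0] with x hx
    unfold sgn
    rcases lt_or_gt_of_ne hx with h | h
    · rw [if_pos (by linarith), if_neg (by linarith)]; norm_num
    · rw [if_neg (by linarith), if_pos h.le]
  rw [h2, integral_neg] at h1
  linarith

lemma integral_abs_stdG : ∫ x, |x| ∂stdG = Real.sqrt (2 / Real.pi) := by
  rw [integral_gaussianReal_eq_integral_smul (by norm_num)]
  have h1 : ∀ x : ℝ, gaussianPDFReal 0 1 x • |x| =
      (fun y : ℝ => (Real.sqrt (2 * Real.pi))⁻¹ * (y * Real.exp (-(1/2) * y ^ 2))) |x| := by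
    intro x
    simp only [gaussianPDFReal_def, smul_eq_mul, sq_abs]
    norm_num
    ring_nf
  simp_rw [h1]
  rw [integral_comp_abs (f := fun y : ℝ => (Real.sqrt (2 * Real.pi))⁻¹ * (y * Real.exp (-(1/2) * y ^ 2)))]
  have h3 := integral_rpow_mul_exp_neg_mul_rpow (p := 2) (q := 1) (b := 1 / 2)
    (by norm_num) (by norm_num) (by norm_num)
  norm_num at h3
  norm_num
  rw [integral_const_mul, h3]
  have hpi := Real.pi_pos
  have h2 := Real.mul_self_sqrt (show (0:ℝ) ≤ 2 by norm_num)
  have : Real.sqrt 2 ≠ 0 := by positivity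
  have : Real.sqrt Real.pi ≠ 0 := by positivity
  field_simp
  nlinarith


/-- Correlation of the signs of a standard Gaussian pair: it dominates `2 / π` times the correlation
of the pair, when the latter is nonnegative. Writing the pair as `√ρ W + √(1-ρ) Z`,
`√ρ W + √(1-ρ) Z'` with independent `W, Z, Z'`, the expectation is that of `k(W)²`, where `k` is the
conditional expectation given `W`; the Cauchy-Schwarz inequality against `W` gives the bound. -/
lemma IsStdPair.sgn_corr {Ω : Type*} [MeasurableSpace Ω]
    {P : Measure Ω} [IsProbabilityMeasure P]
    {X Y : Ω → ℝ} {ρ : ℝ} (hX : Measurable X) (hY : Measurable Y)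
    (h : IsStdPair P X Y ρ) (h0 : 0 ≤ ρ) (h1 : ρ ≤ 1) :
    2 / Real.pi * ρ ≤ ∫ ω, sgn (X ω) * sgn (Y ω) ∂P ∧
    (ρ = 0 → ∫ ω, sgn (X ω) * sgn (Y ω) ∂P = 0) := by
  set a := Real.sqrt ρ with ha
  set b := Real.sqrt (1 - ρ) with hb
  have haa : a * a = ρ := Real.mul_self_sqrt h0
  have hbb : b * b = 1 - ρ := Real.mul_self_sqrt (by linarith)
  have hF : Measurable (fun p : ℝ × ℝ => sgn p.1 * sgn p.2) := by fun_prop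
  have hpair : IsStdPair (stdG.prod (stdG.prod stdG))
      (fun x => a * x.1 + b * x.2.1) (fun x => a * x.1 + b * x.2.2) ρ := by
    intro s t
    have e := stdG_char3 (a * (s + t)) (b * s) (b * t)
    convert e using 3
    · push_cast; ring_nf
    · congr 2
      linear_combination (- 2 * s * t) * haa - (s ^ 2 + t ^ 2) * (haa + hbb)
  rw [h.integral_eq hX hY (by fun_prop) (by fun_prop) hpair (fun x y => sgn x * sgn y) hF]
  set k : ℝ → ℝ := fun w => ∫ z, sgn (a * w + b * z) ∂stdG with hk
  have hkm : Measurable k := by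
    have : StronglyMeasurable (Function.uncurry fun w z : ℝ => sgn (a * w + b * z)) :=
      Measurable.stronglyMeasurable (by unfold Function.uncurry; fun_prop)
    exact this.integral_prod_right.measurable
  have hk1 : ∀ w, |k w| ≤ 1 := by
    intro w
    have := norm_integral_le_of_norm_le_const (μ := stdG) (f := fun z => sgn (a * w + b * z)) (C := 1)
      (Filter.Eventually.of_forall fun z => by rw [Real.norm_eq_abs, abs_sgn])
    simpa using this
  have hint : Integrable (fun x : ℝ × ℝ × ℝ => sgn (a * x.1 + b * x.2.1) * sgn (a * x.1 + b * x.2.2))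
      (stdG.prod (stdG.prod stdG)) := by
    refine Integrable.of_bound (C := 1) (Measurable.aestronglyMeasurable (by fun_prop)) ?_
    exact Filter.Eventually.of_forall fun x => by
      rw [Real.norm_eq_abs, abs_mul, abs_sgn, abs_sgn, one_mul]
  have hsq : ∫ x, sgn (a * x.1 + b * x.2.1) * sgn (a * x.1 + b * x.2.2)
      ∂(stdG.prod (stdG.prod stdG)) = ∫ w, k w ^ 2 ∂stdG := by
    rw [integral_prod _ hint]
    refine integral_congr_ae (Filter.Eventually.of_forall fun w => ?_)
    have := integral_prod_mul (μ := stdG) (ν := stdG)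
      (fun z => sgn (a * w + b * z)) (fun z => sgn (a * w + b * z))
    simp only [hk]
    rw [sq]
    exact this
  rw [hsq]
  -- the first moment of `k` against `W`
  have hkw : ∫ w, k w * w ∂stdG = a * Real.sqrt (2 / Real.pi) := by
    have hp1 : IsStdPair (stdG.prod stdG) (fun x => a * x.1 + b * x.2) (fun x => x.1) a := by
      intro s t
      have e := stdG_char2 (a * s + t) (b * s)
      convert e using 3
      · push_cast; ring_nf
      · congr 2
        linear_combination - s ^ 2 * (haa + hbb)
    have hp2 : IsStdPair (stdG.prod stdG) (fun x => x.1) (fun x => a * x.1 + b * x.2) a := by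
      intro s t
      have e := stdG_char2 (s + a * t) (b * t)
      convert e using 3
      · push_cast; ring_nf
      · congr 2
        linear_combination - t ^ 2 * (haa + hbb)
    have hF2 : Measurable (fun p : ℝ × ℝ => sgn p.1 * p.2) := by fun_prop
    have e := hp1.integral_eq (by fun_prop) (by fun_prop) (by fun_prop) (by fun_prop) hp2
      (fun x y => sgn x * y) hF2
    have hi1 : Integrable (fun x : ℝ × ℝ => sgn (a * x.1 + b * x.2) * x.1) (stdG.prod stdG) := by
      refine Integrable.mono (integrable_id_stdG.comp_fst stdG)
        (Measurable.aestronglyMeasurable (by fun_prop)) ?_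
      exact Filter.Eventually.of_forall fun x => by
        rw [Real.norm_eq_abs, abs_mul, abs_sgn, one_mul, Real.norm_eq_abs]
    have hl : ∫ x, sgn (a * x.1 + b * x.2) * x.1 ∂(stdG.prod stdG) = ∫ w, k w * w ∂stdG := by
      rw [integral_prod _ hi1]
      refine integral_congr_ae (Filter.Eventually.of_forall fun w => ?_)
      simp only [hk]
      rw [integral_mul_const]
    rw [← hl, e]
    have hr : ∀ x : ℝ × ℝ, sgn x.1 * (a * x.1 + b * x.2) = a * |x.1| + b * (sgn x.1 * x.2) := by
      intro x; rw [← sgn_mul]; ring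
    simp_rw [hr]
    have hi2 : Integrable (fun x : ℝ × ℝ => sgn x.1 * x.2) (stdG.prod stdG) := by
      refine Integrable.mono (integrable_id_stdG.comp_snd stdG)
        (Measurable.aestronglyMeasurable (by fun_prop)) ?_
      exact Filter.Eventually.of_forall fun x => by
        rw [Real.norm_eq_abs, abs_mul, abs_sgn, one_mul, Real.norm_eq_abs]
    have hi3 : Integrable (fun x : ℝ × ℝ => |x.1|) (stdG.prod stdG) :=
      (integrable_id_stdG.abs).comp_fst stdG
    rw [integral_add (hi3.const_mul a) (hi2.const_mul b), integral_const_mul, integral_const_mul]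
    have e1 : ∫ x : ℝ × ℝ, |x.1| ∂(stdG.prod stdG) = Real.sqrt (2 / Real.pi) := by
      have := integral_prod_mul (μ := stdG) (ν := stdG) (fun x => |x|) (fun _ => (1:ℝ))
      simpa [integral_abs_stdG] using this
    have e2 : ∫ x : ℝ × ℝ, sgn x.1 * x.2 ∂(stdG.prod stdG) = 0 := by
      have := integral_prod_mul (μ := stdG) (ν := stdG) sgn (fun y => y)
      rw [this]
      have := integral_id_gaussianReal (μ := 0) (v := 1)
      simp only [this, mul_zero]
    rw [e1, e2]; ring
  have hik2 : Integrable (fun w => k w ^ 2) stdG := by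
    refine Integrable.of_bound (C := 1) (Measurable.aestronglyMeasurable (by fun_prop)) ?_
    exact Filter.Eventually.of_forall fun w => by
      rw [Real.norm_eq_abs, abs_pow]
      exact pow_le_one₀ (abs_nonneg _) (hk1 w)
  have hikw : Integrable (fun w => k w * w) stdG := by
    refine Integrable.mono integrable_id_stdG (Measurable.aestronglyMeasurable (by fun_prop)) ?_
    exact Filter.Eventually.of_forall fun w => by
      rw [Real.norm_eq_abs, abs_mul, Real.norm_eq_abs]
      exact mul_le_of_le_one_left (abs_nonneg _) (hk1 w)
  constructor
  · set c := a * Real.sqrt (2 / Real.pi) with hc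
    have hnn : 0 ≤ ∫ w, (k w - c * w) ^ 2 ∂stdG := integral_nonneg fun w => sq_nonneg _
    have hexp : ∫ w, (k w - c * w) ^ 2 ∂stdG = ∫ w, k w ^ 2 ∂stdG - c ^ 2 := by
      have : ∀ w, (k w - c * w) ^ 2 = (k w ^ 2 - (2 * c) * (k w * w)) + c ^ 2 * w ^ 2 := by
        intro w; ring
      simp_rw [this]
      have hi4 : Integrable (fun w => k w ^ 2 - (2 * c) * (k w * w)) stdG :=
        hik2.sub (hikw.const_mul _)
      rw [integral_add hi4 (integrable_sq_stdG.const_mul _),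
        integral_sub hik2 (hikw.const_mul _), integral_const_mul, integral_const_mul,
        integral_sq_stdG, hkw]
      ring
    have hc2 : c ^ 2 = 2 / Real.pi * ρ := by
      rw [hc, mul_pow, sq a, haa, Real.sq_sqrt (by have := Real.pi_pos; positivity)]; ring
    linarith
  · intro hρ
    have ha0 : a = 0 := by rw [ha, hρ, Real.sqrt_zero]
    have hb1 : b = 1 := by rw [hb, hρ, sub_zero, Real.sqrt_one]
    have hk0 : ∀ w, k w = 0 := by
      intro w
      simp only [hk, ha0, hb1, zero_mul, zero_add, one_mul, integral_sgn_stdG]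
    simp [hk0]


lemma isStdPair_inner {V : Type*} [Fintype V] (a b : EuclideanSpace ℝ V)
    (ha : ‖a‖ = 1) (hb : ‖b‖ = 1) :
    IsStdPair (stdGaussian (EuclideanSpace ℝ V)) (fun g => inner ℝ g a) (fun g => inner ℝ g b)
      (inner ℝ a b) := by
  intro s t
  have h := charFun_stdGaussian (s • a + t • b)
  rw [charFun_apply] at h
  simp only [inner_add_right, real_inner_smul_right] at h
  rw [h]
  congr 1
  rw [← Complex.ofReal_pow, norm_add_sq_real, norm_smul, norm_smul, ha, hb]
  simp only [real_inner_smul_left, real_inner_smul_right, mul_one, Real.norm_eq_abs, sq_abs]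
  push_cast
  ring

/-- Gaussian rounding of a system of unit vectors with nonnegative inner products: some signs do at
least as well on a given quadratic form as the correlations of the random signs. -/
lemma exists_signs {V : Type*} [Fintype V] (L : Finset V) (B : V → V → ℝ)
    (a : V → EuclideanSpace ℝ V) (ha : ∀ v, ‖a v‖ = 1) (hnn : ∀ u v, 0 ≤ inner ℝ (a u) (a v)) :
    ∃ R : V → V → ℝ, (∀ u v, 2 / Real.pi * inner ℝ (a u) (a v) ≤ R u v ∧ R u v ≤ 1 ∧
      (inner ℝ (a u) (a v) = 0 → R u v = 0)) ∧
    ∃ s : V → ℝ, (∀ v, s v = 1 ∨ s v = -1) ∧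
      ∑ u ∈ L, ∑ v ∈ L, B u v * R u v ≤ ∑ u ∈ L, ∑ v ∈ L, B u v * (s u * s v) := by
  set P := stdGaussian (EuclideanSpace ℝ V) with hP
  have hm : ∀ v, Measurable (fun g : EuclideanSpace ℝ V => (inner ℝ g (a v) : ℝ)) := by
    intro v; fun_prop
  have hint : ∀ u v, Integrable
      (fun g : EuclideanSpace ℝ V => sgn (inner ℝ g (a u)) * sgn (inner ℝ g (a v))) P := by
    intro u v
    refine Integrable.of_bound (C := 1)
      ((measurable_sgn.comp (hm u)).mul (measurable_sgn.comp (hm v))).aestronglyMeasurable ?_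
    exact Filter.Eventually.of_forall fun x => by
      rw [Real.norm_eq_abs, abs_mul, abs_sgn, abs_sgn, one_mul]
  refine ⟨fun u v => ∫ g, sgn (inner ℝ g (a u)) * sgn (inner ℝ g (a v)) ∂P, ?_, ?_⟩
  · intro u v
    have hle : (inner ℝ (a u) (a v) : ℝ) ≤ 1 := by
      have := real_inner_le_norm (a u) (a v)
      rwa [ha, ha, one_mul] at this
    have hc := (isStdPair_inner (a u) (a v) (ha u) (ha v)).sgn_corr (hm u) (hm v) (hnn u v) hle
    refine ⟨hc.1, ?_, hc.2⟩
    have : ∫ g, sgn (inner ℝ g (a u)) * sgn (inner ℝ g (a v)) ∂P ≤ ∫ _, (1 : ℝ) ∂P := by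
      refine integral_mono (hint u v) (integrable_const _) fun g => ?_
      refine (le_abs_self _).trans ?_
      rw [abs_mul, abs_sgn, abs_sgn, one_mul]
    simpa using this
  · have hi : Integrable (fun g => ∑ u ∈ L, ∑ v ∈ L,
        B u v * (sgn (inner ℝ g (a u)) * sgn (inner ℝ g (a v)))) P :=
      integrable_finsetSum _ fun u _ => integrable_finsetSum _ fun v _ => (hint u v).const_mul _
    obtain ⟨g, hg⟩ := exists_integral_le hi
    refine ⟨fun v => sgn (inner ℝ g (a v)), fun v => ?_, ?_⟩
    · exact sgn_eq_or _
    · refine le_trans (le_of_eq ?_) hg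
      rw [integral_finsetSum _ fun u _ => integrable_finsetSum _ fun v _ => (hint u v).const_mul _]
      refine Finset.sum_congr rfl fun u _ => ?_
      rw [integral_finsetSum _ fun v _ => (hint u v).const_mul _]
      exact Finset.sum_congr rfl fun v _ => (integral_const_mul _ _).symm

end GaussianPart

/-! ### Quadratic forms at sign vectors -/

section SignForms

variable {V : Type*} [DecidableEq V]

/-- A `±1`-valued function. -/
def IsSign (s : V → ℝ) : Prop := ∀ v, s v = 1 ∨ s v = -1

lemma IsSign.mul_self {s : V → ℝ} (hs : IsSign s) (v : V) : s v * s v = 1 := by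
  rcases hs v with h | h <;> rw [h] <;> norm_num

/-- The quadratic form with matrix `B`, restricted to the coordinates in `S`. -/
noncomputable def qf (B : V → V → ℝ) (S : Finset V) (s : V → ℝ) : ℝ :=
  ∑ u ∈ S, ∑ v ∈ S, B u v * (s u * s v)

/-- Sign vectors on disjoint sets can be glued without loss, since flipping all signs on one of the
sets negates the cross terms. -/
lemma exists_sign_union (B : V → V → ℝ) {S T : Finset V} (hST : Disjoint S T) {s t : V → ℝ}
    (hs : IsSign s) (ht : IsSign t) :
    ∃ r, IsSign r ∧ qf B S s + qf B T t ≤ qf B (S ∪ T) r := by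
  set X := ∑ u ∈ S, ∑ v ∈ T, B u v * (s u * t v) + ∑ u ∈ T, ∑ v ∈ S, B u v * (t u * s v) with hX
  have key : ∀ e : ℝ, e * e = 1 →
      qf B (S ∪ T) (fun v => if v ∈ S then s v else e * t v) = qf B S s + qf B T t + e * X := by
    intro e he
    have hS : ∀ v ∈ S, (if v ∈ S then s v else e * t v) = s v := fun v hv => if_pos hv
    have hT : ∀ v ∈ T, (if v ∈ S then s v else e * t v) = e * t v := fun v hv =>
      if_neg fun h => Finset.disjoint_left.mp hST h hv
    unfold qf
    rw [Finset.sum_union hST]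
    simp_rw [Finset.sum_union hST, Finset.sum_add_distrib]
    have e1 : ∑ u ∈ S, ∑ v ∈ S, B u v * ((if u ∈ S then s u else e * t u) *
        (if v ∈ S then s v else e * t v)) = ∑ u ∈ S, ∑ v ∈ S, B u v * (s u * s v) :=
      Finset.sum_congr rfl fun u hu => Finset.sum_congr rfl fun v hv => by rw [hS u hu, hS v hv]
    have e2 : ∑ u ∈ S, ∑ v ∈ T, B u v * ((if u ∈ S then s u else e * t u) *
        (if v ∈ S then s v else e * t v)) = e * ∑ u ∈ S, ∑ v ∈ T, B u v * (s u * t v) := by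
      simp_rw [Finset.mul_sum]
      exact Finset.sum_congr rfl fun u hu => Finset.sum_congr rfl fun v hv => by
        rw [hS u hu, hT v hv]; ring
    have e3 : ∑ u ∈ T, ∑ v ∈ S, B u v * ((if u ∈ S then s u else e * t u) *
        (if v ∈ S then s v else e * t v)) = e * ∑ u ∈ T, ∑ v ∈ S, B u v * (t u * s v) := by
      simp_rw [Finset.mul_sum]
      exact Finset.sum_congr rfl fun u hu => Finset.sum_congr rfl fun v hv => by
        rw [hT u hu, hS v hv]; ring
    have e4 : ∑ u ∈ T, ∑ v ∈ T, B u v * ((if u ∈ S then s u else e * t u) *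
        (if v ∈ S then s v else e * t v)) = ∑ u ∈ T, ∑ v ∈ T, B u v * (t u * t v) :=
      Finset.sum_congr rfl fun u hu => Finset.sum_congr rfl fun v hv => by
        rw [hT u hu, hT v hv, show e * t u * (e * t v) = (e * e) * (t u * t v) by ring, he, one_mul]
    rw [e1, e2, e3, e4, hX]
    ring
  have hsign : ∀ e : ℝ, (e = 1 ∨ e = -1) → IsSign (fun v => if v ∈ S then s v else e * t v) := by
    intro e he v
    dsimp only
    split_ifs
    · exact hs v
    · rcases he with rfl | rfl <;> rcases ht v with h | h <;> rw [h] <;> norm_num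
  rcases le_total 0 X with h | h
  · refine ⟨_, hsign 1 (Or.inl rfl), ?_⟩
    rw [key 1 (by norm_num)]; linarith
  · refine ⟨_, hsign (-1) (Or.inr rfl), ?_⟩
    rw [key (-1) (by norm_num)]; linarith

/-- Gluing single coordinates one after the other makes all off-diagonal terms harmless. -/
lemma exists_sign_diag (B : V → V → ℝ) (S : Finset V) :
    ∃ s, IsSign s ∧ ∑ v ∈ S, B v v ≤ qf B S s := by
  induction S using Finset.induction_on with
  | empty => exact ⟨fun _ => 1, fun _ => Or.inl rfl, by simp [qf]⟩
  | insert a S ha ih =>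
    obtain ⟨s, hs, h⟩ := ih
    obtain ⟨r, hr, h'⟩ := exists_sign_union B (Finset.disjoint_singleton_left.mpr ha)
      (s := fun _ => 1) (fun _ => Or.inl rfl) hs
    refine ⟨r, hr, ?_⟩
    rw [Finset.sum_insert ha, Finset.insert_eq]
    refine le_trans ?_ h'
    simp only [qf, Finset.sum_singleton] at *
    linarith

end SignForms

/-! ### The modularity matrix and vertices of large degree -/

section GraphPart

variable {V : Type*} [Fintype V] [DecidableEq V] (G : SimpleGraph V) [DecidableRel G.Adj]

/-- The `0/1` adjacency indicator. -/
noncomputable def adjR (u v : V) : ℝ := if G.Adj u v then 1 else 0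

lemma adjR_nonneg (u v : V) : 0 ≤ adjR G u v := by unfold adjR; split_ifs <;> norm_num

lemma adjR_le_one (u v : V) : adjR G u v ≤ 1 := by unfold adjR; split_ifs <;> norm_num

lemma adjR_comm (u v : V) : adjR G u v = adjR G v u := by simp [adjR, G.adj_comm]

lemma sum_adjR (u : V) : ∑ v, adjR G u v = (G.degree u : ℝ) := by
  simp [adjR, ← SimpleGraph.card_neighborFinset_eq_degree, SimpleGraph.neighborFinset_eq_filter]

lemma sum_degree_real : ∑ v, (G.degree v : ℝ) = 2 * (G.edgeFinset.card : ℝ) := by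
  have := G.sum_degrees_eq_twice_card_edges
  exact_mod_cast this

/-- The modularity matrix, multiplied by `2m`. -/
noncomputable def modB (u v : V) : ℝ :=
  2 * (G.edgeFinset.card : ℝ) * adjR G u v - (G.degree u : ℝ) * (G.degree v : ℝ)

lemma modB_self (v : V) : modB G v v = - (G.degree v : ℝ) ^ 2 := by
  simp [modB, adjR]; ring

lemma edgeCount_eq (A : Finset V) (x : V → ℝ) (hx : ∀ v, x v = if v ∈ A then 1 else 0) :
    edgeCount G A = (∑ u, ∑ v, adjR G u v * (x u * x v)) / 2 := by
  unfold edgeCount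
  congr 1
  rw [← Fintype.sum_prod_type', Finset.card_filter]
  push_cast
  refine Finset.sum_congr rfl fun p _ => ?_
  rw [hx, hx, adjR]
  by_cases h1 : G.Adj p.1 p.2 <;> by_cases h2 : p.1 ∈ A <;> by_cases h3 : p.2 ∈ A <;>
    simp [h1, h2, h3]

lemma vol_eq (A : Finset V) (x : V → ℝ) (hx : ∀ v, x v = if v ∈ A then 1 else 0) :
    vol G A = ∑ v, (G.degree v : ℝ) * x v := by
  simp [vol, hx, Finset.sum_ite_mem]

lemma qf_modB_univ (s : V → ℝ) :
    qf (modB G) Finset.univ s = 2 * (G.edgeFinset.card : ℝ) * ∑ u, ∑ v, adjR G u v * (s u * s v)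
      - (∑ v, (G.degree v : ℝ) * s v) ^ 2 := by
  unfold qf modB
  rw [sq, Finset.sum_mul_sum, Finset.mul_sum, ← Finset.sum_sub_distrib]
  refine Finset.sum_congr rfl fun u _ => ?_
  rw [Finset.mul_sum, ← Finset.sum_sub_distrib]
  exact Finset.sum_congr rfl fun v _ => by ring

/-- The bipartition into the two level sets of a sign vector has modularity score equal to the
quadratic form of the modularity matrix. -/
lemma qf_le_modularity (hm : 0 < (G.edgeFinset.card : ℝ)) (s : V → ℝ) (hs : IsSign s) :
    qf (modB G) Finset.univ s / (8 * (G.edgeFinset.card : ℝ) ^ 2) ≤ modularity G := by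
  set m := (G.edgeFinset.card : ℝ) with hmdef
  set A : Finset V := Finset.univ.filter (fun v => s v = 1) with hA
  have hV : (Finset.univ : Finset V).Nonempty := by
    by_contra h
    rw [Finset.not_nonempty_iff_eq_empty] at h
    have := sum_degree_real G
    rw [h, Finset.sum_empty] at this
    linarith
  have hne : A ≠ Aᶜ := by
    intro h
    obtain ⟨v, -⟩ := hV
    by_cases hv : v ∈ A
    · have := hv
      rw [h, Finset.mem_compl] at this
      exact this hv
    · exact hv (by rw [h, Finset.mem_compl]; exact hv)
  have hindep : ({A, Aᶜ} : Finset (Finset V)).SupIndep id := by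
    rw [Finset.supIndep_pair hne]
    exact disjoint_compl_right
  have hsup : ({A, Aᶜ} : Finset (Finset V)).sup id = Finset.univ := by
    simp
  set P := Finpartition.ofErase ({A, Aᶜ} : Finset (Finset V)) hindep hsup with hP
  -- a possibly empty part contributes nothing
  have hscore : modularityScore G P = ∑ X ∈ ({A, Aᶜ} : Finset (Finset V)),
      (edgeCount G X / m - (vol G X / (2 * m)) ^ 2) := by
    unfold modularityScore
    rw [hP]
    refine Finset.sum_erase _ ?_
    simp [edgeCount, vol]
  have hx : ∀ v, (1 + s v) / 2 = if v ∈ A then 1 else 0 := by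
    intro v
    rcases hs v with h | h <;> simp [hA, h] <;> norm_num
  have hy : ∀ v, (1 - s v) / 2 = if v ∈ Aᶜ then 1 else 0 := by
    intro v
    rcases hs v with h | h <;> simp [hA, h] <;> norm_num
  have hdeg : ∑ u, ∑ v, adjR G u v = 2 * m := by
    simp_rw [sum_adjR]; exact sum_degree_real G
  have hE : edgeCount G A + edgeCount G Aᶜ =
      (2 * m + ∑ u, ∑ v, adjR G u v * (s u * s v)) / 4 := by
    rw [edgeCount_eq G A _ hx, edgeCount_eq G Aᶜ _ hy, ← hdeg, ← add_div,
      ← Finset.sum_add_distrib, ← Finset.sum_add_distrib, Finset.sum_div, Finset.sum_div]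
    refine Finset.sum_congr rfl fun u _ => ?_
    rw [← Finset.sum_add_distrib, ← Finset.sum_add_distrib, Finset.sum_div, Finset.sum_div]
    exact Finset.sum_congr rfl fun v _ => by ring
  have hvA : vol G A = (2 * m + ∑ v, (G.degree v : ℝ) * s v) / 2 := by
    rw [vol_eq G A _ hx, ← sum_degree_real, ← Finset.sum_add_distrib, Finset.sum_div]
    exact Finset.sum_congr rfl fun v _ => by ring
  have hvB : vol G Aᶜ = (2 * m - ∑ v, (G.degree v : ℝ) * s v) / 2 := by
    rw [vol_eq G Aᶜ _ hy, ← sum_degree_real, ← Finset.sum_sub_distrib, Finset.sum_div]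
    exact Finset.sum_congr rfl fun v _ => by ring
  have hfin : qf (modB G) Finset.univ s / (8 * m ^ 2) = modularityScore G P := by
    rw [hscore, Finset.sum_pair hne, qf_modB_univ, hvA, hvB]
    have : edgeCount G Aᶜ = (2 * m + ∑ u, ∑ v, adjR G u v * (s u * s v)) / 4 - edgeCount G A := by
      linarith
    rw [this]
    field_simp
    ring
  rw [hfin]
  exact le_ciSup (f := fun P : Finpartition (Finset.univ : Finset V) => modularityScore G P)
    (Set.finite_range _).bddAbove P

/-- Signs on a set of vertices of large degree: pair the vertices greedily in order of decreasing
degree, with opposite signs inside each pair. The squared degree differences telescope, and each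
pair loses at most one edge. -/
lemma exists_sign_high (H : Finset V) : ∀ M : ℝ, (∀ v ∈ H, (G.degree v : ℝ) ≤ M) →
    ∃ s, IsSign s ∧ - (2 * (G.edgeFinset.card : ℝ) * H.card) - M ^ 2 ≤ qf (modB G) H s := by
  set m := (G.edgeFinset.card : ℝ) with hmdef
  have hm0 : 0 ≤ m := by positivity
  induction H using Finset.strongInduction with
  | H H ih =>
    intro M hM
    rcases H.eq_empty_or_nonempty with rfl | hne
    · exact ⟨fun _ => 1, fun _ => Or.inl rfl, by simp [qf]; positivity⟩
    obtain ⟨u, hu, humax⟩ := H.exists_max_image (fun v => G.degree v) hne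
    have hdu : (G.degree u : ℝ) ^ 2 ≤ M ^ 2 := pow_le_pow_left₀ (by positivity) (hM u hu) 2
    have hcard : ((H.erase u).card : ℝ) + 1 = H.card := by
      exact_mod_cast Finset.card_erase_add_one hu
    rcases (H.erase u).eq_empty_or_nonempty with h1 | hne'
    · have hH : H = {u} := by rw [← Finset.insert_erase hu, h1]; rfl
      refine ⟨fun _ => 1, fun _ => Or.inl rfl, ?_⟩
      rw [hH]
      simp only [qf, Finset.sum_singleton, modB_self, Finset.card_singleton]
      push_cast
      linarith
    obtain ⟨v, hv, hvmax⟩ := (H.erase u).exists_max_image (fun v => G.degree v) hne'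
    have huv : u ≠ v := fun h => Finset.ne_of_mem_erase hv h.symm
    set H' := (H.erase u).erase v with hH'
    have hcard' : (H'.card : ℝ) + 1 = (H.erase u).card := by
      exact_mod_cast Finset.card_erase_add_one hv
    have hsub : H' ⊂ H := lt_of_le_of_lt (Finset.erase_subset _ _) (Finset.erase_ssubset hu)
    obtain ⟨s, hs, hqs⟩ := ih H' hsub (G.degree v) (fun w hw => by
      exact_mod_cast hvmax w (Finset.mem_of_mem_erase hw))
    have hdis : Disjoint ({u, v} : Finset V) H' := by
      rw [Finset.disjoint_left]
      intro w hw hw'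
      simp only [hH', Finset.mem_erase, Finset.mem_insert, Finset.mem_singleton] at hw hw'
      tauto
    have hun : ({u, v} : Finset V) ∪ H' = H := by
      rw [hH', Finset.insert_union, ← Finset.insert_eq, Finset.insert_erase hv,
        Finset.insert_erase hu]
    set t : V → ℝ := fun w => if w = u then 1 else -1 with ht
    have hts : IsSign t := fun w => by simp only [ht]; split_ifs <;> simp
    obtain ⟨r, hr, hqr⟩ := exists_sign_union (modB G) hdis hts hs
    refine ⟨r, hr, ?_⟩
    rw [hun] at hqr
    have hpair : - ((G.degree u : ℝ) - G.degree v) ^ 2 - 4 * m ≤ qf (modB G) {u, v} t := by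
      have e : qf (modB G) {u, v} t =
          - ((G.degree u : ℝ) - G.degree v) ^ 2 - 4 * m * adjR G u v := by
        have h1 : t u = 1 := by simp [ht]
        have h2 : t v = -1 := by simp [ht, huv.symm]
        simp only [qf, Finset.sum_pair huv, h1, h2, modB_self]
        simp only [modB, adjR_comm G v u]
        ring
      rw [e]
      nlinarith [adjR_le_one G u v]
    have hdvu : (G.degree v : ℝ) ≤ G.degree u := by
      exact_mod_cast humax v (Finset.mem_of_mem_erase hv)
    have hdv0 : (0 : ℝ) ≤ G.degree v := by positivity
    have : (H.card : ℝ) = H'.card + 2 := by linarith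
    rw [this]
    nlinarith [mul_nonneg hdv0 (sub_nonneg.mpr hdvu)]

end GraphPart

/-! ### Vertices of small degree -/

section LowDegree

variable {V : Type*} [Fintype V] [DecidableEq V] (G : SimpleGraph V) [DecidableRel G.Adj]

/-- Unit vectors proportional to `e_v + c ∑ e_w`, the sum over the neighbours `w ∈ L` of `v`. For
vertices of `L`, adjacency forces inner product at least `c`, while two distinct vertices that are
not adjacent and have no common neighbour in `L` get orthogonal vectors. The weight `c = 1/√D`
keeps the unnormalized squared norms at most `2`. -/
lemma exists_vectors_low (L : Finset V) (D c : ℝ) (hc : 0 < c) (hcD : c ^ 2 * D = 1)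
    (hdeg : ∀ v ∈ L, (G.degree v : ℝ) ≤ D) :
    ∃ a : V → EuclideanSpace ℝ V, (∀ v, ‖a v‖ = 1) ∧ (∀ u v, 0 ≤ (inner ℝ (a u) (a v) : ℝ)) ∧
      (∀ u ∈ L, ∀ v ∈ L, G.Adj u v → c ≤ inner ℝ (a u) (a v)) ∧
      (∀ u ∈ L, ∀ v ∈ L, u ≠ v → (inner ℝ (a u) (a v) : ℝ) ≠ 0 →
        1 ≤ adjR G u v + ∑ w ∈ L, adjR G u w * adjR G w v) := by
  set r : V → V → ℝ := fun v w => (if w = v then 1 else 0) + c * (if w ∈ L then adjR G v w else 0)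
    with hr
  have hr0 : ∀ v w, 0 ≤ r v w := by
    intro v w
    have := adjR_nonneg G v w
    simp only [hr]; split_ifs <;> positivity
  have hrself : ∀ v, r v v = 1 := by intro v; simp [hr, adjR]
  have hradj : ∀ u v, v ∈ L → G.Adj u v → r u v = c := by
    intro u v hv h; simp [hr, adjR, h, hv, h.ne']
  set x : V → EuclideanSpace ℝ V := fun v => WithLp.toLp 2 (r v) with hx
  have hin : ∀ u v, (inner ℝ (x u) (x v) : ℝ) = ∑ w, r u w * r v w := by
    intro u v
    simp [hx, PiLp.inner_apply, mul_comm]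
  have hnorm_sq : ∀ v, ‖x v‖ ^ 2 = ∑ w, r v w * r v w := by
    intro v; rw [← hin, real_inner_self_eq_norm_sq]
  have hpos : ∀ v, 0 < ‖x v‖ := by
    intro v
    have h1 : r v v * r v v ≤ ∑ w, r v w * r v w :=
      Finset.single_le_sum (f := fun w => r v w * r v w)
        (fun w _ => mul_nonneg (hr0 v w) (hr0 v w)) (Finset.mem_univ v)
    rw [hrself, ← hnorm_sq] at h1
    have := norm_nonneg (x v)
    by_contra h
    have : ‖x v‖ = 0 := by linarith
    rw [this] at h1; norm_num at h1
  have hle : ∀ v ∈ L, ‖x v‖ ^ 2 ≤ 2 := by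
    intro v hv
    rw [hnorm_sq]
    have h1 : ∀ w, r v w * r v w ≤ (if w = v then 1 else 0) + c ^ 2 * adjR G v w := by
      intro w
      simp only [hr, adjR]
      by_cases hw : w = v
      · subst hw; simp
      · by_cases h2 : w ∈ L <;> by_cases h3 : G.Adj v w <;> simp [hw, h2, h3, sq, mul_self_nonneg]
    calc ∑ w, r v w * r v w ≤ ∑ w, ((if w = v then 1 else 0) + c ^ 2 * adjR G v w) :=
          Finset.sum_le_sum fun w _ => h1 w
      _ = 1 + c ^ 2 * G.degree v := by
          rw [Finset.sum_add_distrib, ← Finset.mul_sum, sum_adjR]; simp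
      _ ≤ 1 + c ^ 2 * D := by gcongr; exact hdeg v hv
      _ = 2 := by rw [hcD]; norm_num
  have hina : ∀ u v, (inner ℝ (‖x u‖⁻¹ • x u) (‖x v‖⁻¹ • x v) : ℝ) =
      ‖x u‖⁻¹ * ‖x v‖⁻¹ * ∑ w, r u w * r v w := by
    intro u v
    rw [real_inner_smul_left, real_inner_smul_right, hin]; ring
  refine ⟨fun v => ‖x v‖⁻¹ • x v, ?_, ?_, ?_, ?_⟩
  · intro v
    rw [norm_smul, norm_inv, norm_norm, inv_mul_cancel₀ (hpos v).ne']
  · intro u v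
    rw [hina]
    have := Finset.sum_nonneg fun w (_ : w ∈ Finset.univ) => mul_nonneg (hr0 u w) (hr0 v w)
    positivity
  · intro u hu v hv huv
    rw [hina]
    have h1 : ∑ w ∈ {u, v}, r u w * r v w ≤ ∑ w, r u w * r v w :=
      Finset.sum_le_sum_of_subset_of_nonneg (Finset.subset_univ _)
        fun w _ _ => mul_nonneg (hr0 u w) (hr0 v w)
    rw [Finset.sum_pair huv.ne, hrself, hrself, hradj u v hv huv, hradj v u hu huv.symm] at h1
    have hp : 0 < ‖x u‖ * ‖x v‖ := mul_pos (hpos u) (hpos v)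
    have h2 : ‖x u‖ * ‖x v‖ ≤ 2 := by
      nlinarith [hle u hu, hle v hv, sq_nonneg (‖x u‖ - ‖x v‖)]
    rw [← mul_inv, inv_mul_eq_div, le_div_iff₀ hp]
    nlinarith
  · intro u hu v hv huv h
    rw [hina] at h
    have hs : ∑ w, r u w * r v w ≠ 0 := right_ne_zero_of_mul h
    obtain ⟨w, -, hw⟩ := Finset.exists_ne_zero_of_sum_ne_zero hs
    have hp0 : ∀ w ∈ L, 0 ≤ adjR G u w * adjR G w v := fun w _ =>
      mul_nonneg (adjR_nonneg G u w) (adjR_nonneg G w v)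
    have hcase : ∀ y, r y w ≠ 0 → w = y ∨ (w ∈ L ∧ G.Adj y w) := by
      intro y hy
      by_contra! hcon
      apply hy
      by_cases hwL : w ∈ L
      · simp [hr, hcon.1, adjR, hcon.2 hwL]
      · simp [hr, hcon.1, hwL]
    have hsn := Finset.sum_nonneg hp0
    have hadj : G.Adj u v → 1 ≤ adjR G u v + ∑ w ∈ L, adjR G u w * adjR G w v := by
      intro h; rw [adjR, if_pos h]; linarith
    rcases hcase u (left_ne_zero_of_mul hw) with h1 | ⟨hwL, h1⟩ <;>
      rcases hcase v (right_ne_zero_of_mul hw) with h2 | ⟨-, h2⟩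
    · exact absurd (h1.symm.trans h2) huv
    · exact hadj (h1 ▸ h2.symm)
    · exact hadj (h2 ▸ h1)
    · have h3 := Finset.single_le_sum hp0 hwL
      have h4 : adjR G u w * adjR G w v = 1 := by simp [adjR, h1, h2.symm]
      have := adjR_nonneg G u v
      linarith

/-- Gaussian rounding on the vertices of degree at most `D`. Each edge inside `L` gains, while a
negative entry of the modularity matrix costs at most `D ^ 2`, and off the diagonal it matters only
for vertices that are adjacent or have a common neighbour in `L`. -/
lemma exists_sign_low (L : Finset V) (D : ℝ) (hD : 0 < D)
    (hdeg : ∀ v ∈ L, (G.degree v : ℝ) ≤ D) :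
    ∃ s, IsSign s ∧
      (∑ u ∈ L, ∑ v ∈ L, adjR G u v) *
        (2 * (G.edgeFinset.card : ℝ) * (2 / Real.pi) / Real.sqrt D - D ^ 2 * (1 + D))
        - D * vol G L ≤ qf (modB G) L s := by
  set m := (G.edgeFinset.card : ℝ) with hmdef
  have hm0 : 0 ≤ m := by positivity
  set c := 1 / Real.sqrt D with hcdef
  have hsD : 0 < Real.sqrt D := Real.sqrt_pos.mpr hD
  have hc : 0 < c := by positivity
  have hcD : c ^ 2 * D = 1 := by
    rw [hcdef, div_pow, Real.sq_sqrt hD.le]; field_simp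
  obtain ⟨a, ha, hnn, hadj, hnear⟩ := exists_vectors_low G L D c hc hcD hdeg
  obtain ⟨R, hR, s, hs, hsum⟩ := exists_signs L (modB G) a ha hnn
  refine ⟨s, hs, le_trans ?_ hsum⟩
  have hpi : 0 < 2 / Real.pi := by have := Real.pi_pos; positivity
  have hterm : ∀ u ∈ L, ∀ v ∈ L,
      2 * m * (2 / Real.pi) * c * adjR G u v
        - D ^ 2 * (adjR G u v + ∑ w ∈ L, adjR G u w * adjR G w v)
        - (if v = u then (G.degree u : ℝ) ^ 2 else 0) ≤ modB G u v * R u v := by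
    intro u hu v hv
    obtain ⟨hR1, hR2, hR3⟩ := hR u v
    have hR0 : 0 ≤ R u v := le_trans (mul_nonneg hpi.le (hnn u v)) hR1
    have hdu : (0 : ℝ) ≤ G.degree u := by positivity
    have hdv : (0 : ℝ) ≤ G.degree v := by positivity
    have hp : 0 ≤ ∑ w ∈ L, adjR G u w * adjR G w v := Finset.sum_nonneg fun w _ =>
      mul_nonneg (adjR_nonneg G u w) (adjR_nonneg G w v)
    by_cases huv : v = u
    · subst huv
      rw [if_pos rfl, modB_self]
      have h0 : adjR G v v = 0 := by simp [adjR]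
      rw [h0]
      have := mul_nonneg (sq_nonneg D) hp
      nlinarith [mul_nonneg (sq_nonneg (G.degree v : ℝ)) (sub_nonneg.mpr hR2)]
    rw [if_neg huv, sub_zero]
    have hdd : (G.degree u : ℝ) * G.degree v ≤ D ^ 2 := by
      rw [sq]; exact mul_le_mul (hdeg u hu) (hdeg v hv) hdv hD.le
    have hgain : 2 * m * (2 / Real.pi) * c * adjR G u v ≤ 2 * m * adjR G u v * R u v := by
      by_cases h : G.Adj u v
      · have h1 : 2 / Real.pi * c ≤ R u v :=
          le_trans (mul_le_mul_of_nonneg_left (hadj u hu v hv h) hpi.le) hR1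
        have h2 := mul_le_mul_of_nonneg_left h1 (show 0 ≤ 2 * m by positivity)
        simp only [adjR, if_pos h]
        linarith
      · simp [adjR, h]
    have hloss : (G.degree u : ℝ) * G.degree v * R u v ≤
        D ^ 2 * (adjR G u v + ∑ w ∈ L, adjR G u w * adjR G w v) := by
      by_cases h : (inner ℝ (a u) (a v) : ℝ) = 0
      · rw [hR3 h, mul_zero]
        have := adjR_nonneg G u v
        positivity
      · exact mul_le_mul hdd (hR2.trans (hnear u hu v hv (Ne.symm huv) h)) hR0 (sq_nonneg D)
    unfold modB
    linarith
  refine le_trans ?_ (Finset.sum_le_sum fun u hu => Finset.sum_le_sum fun v hv => hterm u hu v hv)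
  have hrow : ∀ w ∈ L, ∑ u ∈ L, adjR G u w ≤ D := by
    intro w hw
    refine le_trans (Finset.sum_le_sum_of_subset_of_nonneg (Finset.subset_univ L)
      fun u _ _ => adjR_nonneg G u w) ?_
    simp_rw [adjR_comm G _ w, sum_adjR]
    exact hdeg w hw
  have hP : ∑ u ∈ L, ∑ v ∈ L, ∑ w ∈ L, adjR G u w * adjR G w v ≤
      D * ∑ u ∈ L, ∑ v ∈ L, adjR G u v := by
    have e : ∑ u ∈ L, ∑ v ∈ L, ∑ w ∈ L, adjR G u w * adjR G w v =
        ∑ w ∈ L, (∑ u ∈ L, adjR G u w) * ∑ v ∈ L, adjR G w v := by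
      simp_rw [Finset.sum_mul_sum]
      exact (Finset.sum_congr rfl fun u _ => Finset.sum_comm).trans Finset.sum_comm
    rw [e, Finset.mul_sum]
    exact Finset.sum_le_sum fun w hw => mul_le_mul_of_nonneg_right (hrow w hw)
      (Finset.sum_nonneg fun v _ => adjR_nonneg G w v)
  have hdiag : ∑ u ∈ L, ∑ v ∈ L, (if v = u then (G.degree u : ℝ) ^ 2 else 0) ≤ D * vol G L := by
    rw [vol, Finset.mul_sum]
    refine Finset.sum_le_sum fun u hu => ?_
    rw [Finset.sum_ite_eq', if_pos hu, sq]
    exact mul_le_mul_of_nonneg_right (hdeg u hu) (by positivity)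
  simp_rw [Finset.sum_sub_distrib, ← Finset.mul_sum, Finset.sum_add_distrib]
  have hP' := mul_le_mul_of_nonneg_left hP (sq_nonneg D)
  have e : 2 * m * (2 / Real.pi) / Real.sqrt D = 2 * m * (2 / Real.pi) * c := by
    rw [hcdef]; ring
  rw [e]
  linarith

/-- A lower bound for twice the number of edges inside `L`: at most `vol Lᶜ` edges leave `L`. -/
lemma le_sum_adjR (L : Finset V) :
    2 * vol G L - 2 * (G.edgeFinset.card : ℝ) ≤ ∑ u ∈ L, ∑ v ∈ L, adjR G u v := by
  have h1 : ∀ S : Finset V,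
      vol G S = ∑ u ∈ S, ∑ v ∈ L, adjR G u v + ∑ u ∈ S, ∑ v ∈ Lᶜ, adjR G u v := by
    intro S
    rw [vol, ← Finset.sum_add_distrib]
    exact Finset.sum_congr rfl fun u _ => by rw [← sum_adjR, Finset.sum_add_sum_compl]
  have h2 : vol G L + vol G Lᶜ = 2 * (G.edgeFinset.card : ℝ) := by
    rw [← sum_degree_real]; exact Finset.sum_add_sum_compl L _
  have h3 : ∑ u ∈ L, ∑ v ∈ Lᶜ, adjR G u v = ∑ u ∈ Lᶜ, ∑ v ∈ L, adjR G u v := by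
    rw [Finset.sum_comm]
    exact Finset.sum_congr rfl fun u _ => Finset.sum_congr rfl fun v _ => adjR_comm G v u
  have h4 : 0 ≤ ∑ u ∈ Lᶜ, ∑ v ∈ Lᶜ, adjR G u v :=
    Finset.sum_nonneg fun u _ => Finset.sum_nonneg fun v _ => adjR_nonneg G u v
  linarith [h1 L, h1 Lᶜ]

end LowDegree

/-! ### Combining the three degree ranges -/

section Assembly

/-- Replacing the constant `4/π > 1.2732` by `1.04` leaves room for the loss of Gaussian rounding
on non-adjacent pairs. -/
lemma numeric_gain {m D : ℝ} (hD : 1 < D) (h : D ^ 11 ≤ m * (D - 1)) :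
    1.04 * m / Real.sqrt D ≤ 2 * m * (2 / Real.pi) / Real.sqrt D - D ^ 2 * (1 + D) := by
  have hS : 0 < Real.sqrt D := Real.sqrt_pos.mpr (by linarith)
  have hSD : Real.sqrt D ≤ D := by
    rw [Real.sqrt_le_left (by linarith)]; nlinarith
  have hD0 : 0 < D := by linarith
  have hm : 0 < m := by
    by_contra hcon
    have h1 : 0 < D ^ 11 := by positivity
    nlinarith
  have hpi : 0.6366 ≤ 2 / Real.pi := by
    rw [le_div_iff₀ Real.pi_pos]
    nlinarith [Real.pi_lt_d4]
  have h8 : 0 ≤ 0.2332 * D ^ 8 - (D ^ 2 - 1) := by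
    obtain ⟨y, hy⟩ : ∃ y, y = D ^ 2 - 1 := ⟨_, rfl⟩
    have hy0 : 0 ≤ y := by rw [hy]; nlinarith
    have h1 : D ^ 8 = 1 + 4 * y + 6 * y ^ 2 + 4 * y ^ 3 + y ^ 4 := by rw [hy]; ring
    rw [h1, ← hy]
    have := pow_nonneg hy0 3
    have := pow_nonneg hy0 4
    nlinarith [sq_nonneg (y - 0.03)]
  have h2 : D ^ 2 * (1 + D) * Real.sqrt D ≤ 0.2332 * m := by
    have h3 : D ^ 2 * (1 + D) * Real.sqrt D ≤ D ^ 2 * (1 + D) * D := by gcongr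
    have h4 : D ^ 2 * (1 + D) * D * (D - 1) ≤ 0.2332 * m * (D - 1) := by
      have := mul_nonneg (pow_nonneg hD0.le 3) h8
      nlinarith
    exact h3.trans (le_of_mul_le_mul_right h4 (by linarith))
  have h5 : D ^ 2 * (1 + D) = D ^ 2 * (1 + D) * Real.sqrt D / Real.sqrt D := by
    field_simp
  rw [h5, ← sub_div]
  gcongr
  nlinarith

lemma numeric_diag {m D : ℝ} (hD : 1 < D) (h : D ^ 11 ≤ m * (D - 1)) : 8 * D ^ 2 ≤ m := by
  have h1 := one_add_mul_le_pow (show (-2 : ℝ) ≤ D - 1 by linarith) 9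
  have h2 : 8 * D ^ 2 * (D - 1) ≤ m * (D - 1) := by
    have h3 : 8 * (D - 1) ≤ D ^ 9 := by
      have : D ^ 9 = (1 + (D - 1)) ^ 9 := by ring
      rw [this]; push_cast at h1; linarith
    have := mul_le_mul_of_nonneg_left h3 (sq_nonneg D)
    nlinarith
  exact le_of_mul_le_mul_right h2 (by linarith)

variable {V : Type*} [Fintype V] [DecidableEq V] (G : SimpleGraph V) [DecidableRel G.Adj]

/-- Signs outside `L`: the threshold `√(2m)` on the degrees balances the diagonal loss against the
loss of the pairing. -/
lemma exists_sign_compl (L : Finset V) :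
    ∃ s, IsSign s ∧ - (Real.sqrt (2 * (G.edgeFinset.card : ℝ)) * vol G Lᶜ)
      - (G.maxDegree : ℝ) ^ 2 ≤ qf (modB G) Lᶜ s := by
  set m := (G.edgeFinset.card : ℝ) with hmdef
  have hm0 : 0 ≤ m := by positivity
  set T := Real.sqrt (2 * m) with hT
  have hT0 : 0 ≤ T := Real.sqrt_nonneg _
  have hTT : T * T = 2 * m := Real.mul_self_sqrt (by positivity)
  set Mid := Lᶜ.filter fun v => (G.degree v : ℝ) < T with hMid
  set Hi := Lᶜ.filter fun v => ¬ (G.degree v : ℝ) < T with hHi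
  have hdis : Disjoint Mid Hi := Finset.disjoint_filter_filter_not _ _ _
  have hun : Mid ∪ Hi = Lᶜ := Finset.filter_union_filter_not_eq _ _
  obtain ⟨s, hs, hqs⟩ := exists_sign_diag (modB G) Mid
  obtain ⟨t, ht, hqt⟩ := exists_sign_high G Hi G.maxDegree
    (fun v _ => by exact_mod_cast G.degree_le_maxDegree v)
  obtain ⟨r, hr, hqr⟩ := exists_sign_union (modB G) hdis hs ht
  refine ⟨r, hr, ?_⟩
  rw [hun] at hqr
  have h1 : - (T * ∑ v ∈ Mid, (G.degree v : ℝ)) ≤ ∑ v ∈ Mid, modB G v v := by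
    rw [Finset.mul_sum, ← Finset.sum_neg_distrib]
    refine Finset.sum_le_sum fun v hv => ?_
    rw [modB_self]
    have := (Finset.mem_filter.mp hv).2
    have h0 : (0 : ℝ) ≤ G.degree v := by positivity
    nlinarith
  have h2 : 2 * m * Hi.card ≤ T * ∑ v ∈ Hi, (G.degree v : ℝ) := by
    have : T * Hi.card ≤ ∑ v ∈ Hi, (G.degree v : ℝ) := by
      rw [mul_comm, ← nsmul_eq_mul]
      exact Finset.card_nsmul_le_sum _ _ _ fun v hv => not_lt.mp (Finset.mem_filter.mp hv).2
    rw [← hTT, mul_assoc]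
    exact mul_le_mul_of_nonneg_left this hT0
  have h3 : vol G Lᶜ = ∑ v ∈ Mid, (G.degree v : ℝ) + ∑ v ∈ Hi, (G.degree v : ℝ) := by
    rw [vol, ← hun, Finset.sum_union hdis]
  rw [h3]
  linarith

/-- The lower bound in terms of `m` and `D`, before the error terms are put in the form of the
theorem. -/
lemma modularity_ge (L : Finset V) (D γ : ℝ) (hD : 1 < D)
    (h11 : D ^ 11 ≤ (G.edgeFinset.card : ℝ) * (D - 1)) (hγ : 0 < γ)
    (hdeg : ∀ v ∈ L, (G.degree v : ℝ) ≤ D)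
    (hvol : (1 + γ) * (G.edgeFinset.card : ℝ) ≤ vol G L) :
    0.26 * γ / Real.sqrt D - 3 / (8 * Real.sqrt (2 * (G.edgeFinset.card : ℝ)))
      - (G.maxDegree : ℝ) ^ 2 / (8 * (G.edgeFinset.card : ℝ) ^ 2) ≤ modularity G := by
  set m := (G.edgeFinset.card : ℝ) with hmdef
  have hD0 : 0 < D := by linarith
  have h8 := numeric_diag hD h11
  have hm : 0 < m := lt_of_lt_of_le (by positivity) h8
  have hS : 0 < Real.sqrt D := Real.sqrt_pos.mpr hD0
  set T := Real.sqrt (2 * m) with hT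
  have hT0 : 0 < T := Real.sqrt_pos.mpr (by positivity)
  have hTT : T * T = 2 * m := Real.mul_self_sqrt (by positivity)
  obtain ⟨s, hs, hqs⟩ := exists_sign_low G L D hD0 hdeg
  obtain ⟨t, ht, hqt⟩ := exists_sign_compl G L
  obtain ⟨r, hr, hqr⟩ := exists_sign_union (modB G) disjoint_compl_right hs ht
  rw [Finset.union_compl] at hqr
  refine le_trans ?_ (qf_le_modularity G hm r hr)
  rw [← hmdef] at *
  have hE := le_sum_adjR G L
  set E := ∑ u ∈ L, ∑ v ∈ L, adjR G u v
  have hvc : vol G L + vol G Lᶜ = 2 * m := by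
    rw [hmdef, ← sum_degree_real]; exact Finset.sum_add_sum_compl L _
  have hvc0 : 0 ≤ vol G Lᶜ := Finset.sum_nonneg fun v _ => by positivity
  have hgain : 2 * γ * m * (1.04 * m / Real.sqrt D) ≤
      E * (2 * m * (2 / Real.pi) / Real.sqrt D - D ^ 2 * (1 + D)) :=
    mul_le_mul (by linarith) (numeric_gain hD h11) (by positivity)
      (le_trans (by positivity) (show 2 * γ * m ≤ E by linarith))
  have hDT : 4 * D ≤ T := by
    apply Real.le_sqrt_of_sq_le
    nlinarith
  have hl1 : D * vol G L ≤ T / 4 * (2 * m) :=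
    mul_le_mul (by linarith) (by linarith) (by nlinarith) (by positivity)
  have hl2 : T * vol G Lᶜ ≤ T * m := mul_le_mul_of_nonneg_left (by nlinarith) hT0.le
  have hq : 2 * γ * m * (1.04 * m / Real.sqrt D) - 3 / 2 * (T * m) - (G.maxDegree : ℝ) ^ 2 ≤
      qf (modB G) Finset.univ r := by linarith
  have e : 0.26 * γ / Real.sqrt D - 3 / (8 * T) - (G.maxDegree : ℝ) ^ 2 / (8 * m ^ 2) =
      (2 * γ * m * (1.04 * m / Real.sqrt D) - 3 / 2 * (T * m) - (G.maxDegree : ℝ) ^ 2)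
        / (8 * m ^ 2) := by
    have h1 : 3 / (8 * T) = 3 / 2 * (T * m) / (8 * m ^ 2) := by
      rw [div_eq_div_iff (by positivity) (by positivity)]
      linear_combination (- 12 * m) * hTT
    rw [h1, sub_div, sub_div]
    congr 2
    field_simp
    norm_num
  rw [e]
  exact div_le_div_of_nonneg_right hq (by positivity)

end Assembly

/-- Main theorem: universal lower bound on modularity of sparse graphs. -/
theorem modularity_lower_bound
    {V : Type*} [Fintype V] [DecidableEq V] (G : SimpleGraph V) [DecidableRel G.Adj]
    (n : ℕ) (hn : n = Fintype.card V)
    (dbar : ℝ) (hdbar : dbar = 2 * (G.edgeFinset.card : ℝ) / n) (hd1 : 1 ≤ dbar)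
    (C : ℝ) (hC : 1 < C)
    (L : Finset V) (hL : L = Finset.univ.filter (fun v => (G.degree v : ℝ) < C * dbar))
    (γ : ℝ) (hγ : 0 < γ)
    (hvolL : vol G L ≥ (1 + γ) * ((n : ℝ) * dbar / 2))
    (ϑ : ℝ) (hϑ : ϑ = (C * dbar) ^ 10 / (n : ℝ))
    (hsmall : ϑ < (1 / 2) * (1 - 1 / C)) :
    modularity G ≥ (0.26 / Real.sqrt (C * dbar)) * (γ - 2 * ϑ / (C * dbar))
      - ϑ ^ 2 / (2 * dbar ^ 2) - 3 / (8 * Real.sqrt n)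
      - 4 * (G.maxDegree : ℝ) ^ 2 / ((n : ℝ) ^ 2 * dbar ^ 2) := by
  set m := (G.edgeFinset.card : ℝ) with hmdef
  -- `n = 0` would give `dbar = 0`
  have hn0 : (0 : ℝ) < n := by
    rcases Nat.eq_zero_or_pos n with h | h
    · rw [h] at hdbar; norm_num at hdbar; linarith
    · exact_mod_cast h
  have hnd : (n : ℝ) * dbar = 2 * m := by rw [hdbar]; field_simp
  have hnm : (n : ℝ) ≤ 2 * m := by nlinarith
  have hm : 0 < m := by linarith
  set D := C * dbar with hDdef
  have hCD : C ≤ D := by nlinarith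
  have hD : 1 < D := by linarith
  have hD0 : 0 < D := by linarith
  have h11 : D ^ 11 ≤ m * (D - 1) := by
    have h1 : 1 / D ≤ 1 / C := one_div_le_one_div_of_le (by linarith) hCD
    have h2 : D ^ 10 < (1 / 2) * (1 - 1 / D) * n := by
      rw [← div_lt_iff₀ hn0, ← hϑ]; linarith
    have h3 : 0 ≤ 1 - 1 / D := by
      rw [sub_nonneg, div_le_one hD0]; exact hD.le
    have h4 : D ^ 10 ≤ m * (1 - 1 / D) := by nlinarith
    calc D ^ 11 = D ^ 10 * D := by ring
      _ ≤ m * (1 - 1 / D) * D := by gcongr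
      _ = m * (D - 1) := by field_simp
  have hdeg : ∀ v ∈ L, (G.degree v : ℝ) ≤ D := by
    intro v hv
    rw [hL, Finset.mem_filter] at hv
    exact hv.2.le
  have hmain := modularity_ge G L D γ hD h11 hγ hdeg
    (by rw [hnd] at hvolL; rw [← hmdef]; linarith)
  rw [← hmdef] at hmain
  have hϑ0 : 0 ≤ ϑ := by rw [hϑ]; positivity
  have hS : 0 < Real.sqrt D := Real.sqrt_pos.mpr hD0
  have h1 : 0.26 / Real.sqrt D * (γ - 2 * ϑ / D) ≤ 0.26 * γ / Real.sqrt D := by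
    rw [mul_sub, div_mul_eq_mul_div]
    have : 0 ≤ 0.26 / Real.sqrt D * (2 * ϑ / D) := by positivity
    linarith
  have h2 : 0 ≤ ϑ ^ 2 / (2 * dbar ^ 2) := by positivity
  have h3 : 3 / (8 * Real.sqrt (2 * m)) ≤ 3 / (8 * Real.sqrt n) := by
    have : 0 < Real.sqrt n := Real.sqrt_pos.mpr hn0
    gcongr
  have h4 : (G.maxDegree : ℝ) ^ 2 / (8 * m ^ 2) ≤
      4 * (G.maxDegree : ℝ) ^ 2 / ((n : ℝ) ^ 2 * dbar ^ 2) := by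
    rw [← mul_pow, hnd, div_le_div_iff₀ (by positivity) (by positivity)]
    nlinarith [mul_nonneg (sq_nonneg (G.maxDegree : ℝ)) (sq_nonneg m)]
  linarith
end

section
/- Let f : [n] → ℝ be a non-increasing function (f(1) ≥ f(2) ≥ … ≥ f(n)), let L > 0, and let M be a perfect matching on [n] = {1,…,n} such that |i − j| ≤ L for every pair (i,j) ∈ M. Then for any orientation of the edges of M (i.e., any choice, for each matched pair, of which endpoint is listed first), |Σ_{(i,j)∈M} (f(i) − f(j))| ≤ L·|f(n) − f(1)|. -/
/-!
Write `f i - f j` as a telescoping sum of the nonnegative drops `f k - f (k + 1)`. Then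
`∑ |f p.1 - f p.2|` counts the drop at `k` once for each pair that straddles the cut between
`k` and `k + 1`. At most `⌊L⌋` pairs straddle a given cut (`card_straddle_le`): the smaller endpoint
of such a pair lies in `(k - ⌊L⌋, k]`, and distinct pairs of a matching have distinct smaller
endpoints. Hence the total is at most `L` times the sum of all drops, `f 1 - f n`.
-/

open Finset

theorem sum_drop (f : ℕ → ℝ) {a b : ℕ} (h : a ≤ b) :
    ∑ k ∈ Finset.Ico a b, (f k - f (k + 1)) = f a - f b := by
  have := Finset.sum_Ico_sub f h
  rw [← neg_inj, ← Finset.sum_neg_distrib]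
  simpa using this

/-- At most `l` pairs of a matching whose pairs have length at most `l` cross the cut between
`k` and `k + 1`. -/
theorem card_straddle_le (n l k : ℕ) (M : Finset (ℕ × ℕ))
    (hmem : ∀ p ∈ M, p.1 ∈ Finset.Icc 1 n ∧ p.2 ∈ Finset.Icc 1 n ∧ p.1 ≠ p.2)
    (hperf : ∀ k ∈ Finset.Icc 1 n, ∃! p, p ∈ M ∧ (k = p.1 ∨ k = p.2))
    (hl : ∀ p ∈ M, max p.1 p.2 ≤ min p.1 p.2 + l) :
    (M.filter (fun p => k ∈ Finset.Ico (min p.1 p.2) (max p.1 p.2))).card ≤ l := by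
  have hle : (M.filter (fun p => k ∈ Finset.Ico (min p.1 p.2) (max p.1 p.2))).card
      ≤ (Finset.Ioc (k - l) k).card := by
    refine Finset.card_le_card_of_injOn (fun p => min p.1 p.2) ?_ ?_
    · intro p hp
      simp only [Finset.coe_filter, Set.mem_ofPred_eq, Finset.mem_Ico] at hp
      have h1 := hl p hp.1
      have h2 := hmem p hp.1
      simp only [Finset.mem_Icc] at h2
      simp only [Finset.coe_Ioc, Set.mem_Ioc]
      -- If `k < l`, the truncated `k - l` is `0`, and endpoints are at least `1`.
      omega
    · intro p hp q hq hpq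
      simp only [Finset.coe_filter, Set.mem_ofPred_eq] at hp hq
      have h2 := hmem p hp.1
      have hk : min p.1 p.2 ∈ Finset.Icc 1 n := by
        simp only [Finset.mem_Icc] at h2 ⊢
        omega
      have hpq' : min p.1 p.2 = min q.1 q.2 := hpq
      exact (hperf _ hk).unique ⟨hp.1, by omega⟩ ⟨hq.1, by omega⟩
  rw [Nat.card_Ioc] at hle
  omega

/-- Load-balancing lemma: if `f : [n] → ℝ` is non-increasing and `M` is an oriented perfect
matching on `[n] = {1, …, n}` (each pair recorded as an ordered pair) whose pairs are at
distance at most `L`, then `|Σ_{(i,j)∈M} (f i − f j)| ≤ L·|f n − f 1|`. -/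
theorem load_balancing (n : ℕ) (f : ℕ → ℝ)
    (hf : ∀ i j : ℕ, 1 ≤ i → i ≤ j → j ≤ n → f j ≤ f i)
    (L : ℝ) (hL : 0 < L)
    (M : Finset (ℕ × ℕ))
    (hmem : ∀ p ∈ M, p.1 ∈ Finset.Icc 1 n ∧ p.2 ∈ Finset.Icc 1 n ∧ p.1 ≠ p.2)
    (hperf : ∀ k ∈ Finset.Icc 1 n, ∃! p, p ∈ M ∧ (k = p.1 ∨ k = p.2))
    (hclose : ∀ p ∈ M, |(p.1 : ℝ) - (p.2 : ℝ)| ≤ L) :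
    |∑ p ∈ M, (f p.1 - f p.2)| ≤ L * |f n - f 1| := by
  have hl : ∀ p ∈ M, max p.1 p.2 ≤ min p.1 p.2 + ⌊L⌋₊ := by
    intro p hp
    have h := abs_le.1 (hclose p hp)
    have h' : ((max p.1 p.2 - min p.1 p.2 : ℕ) : ℝ) ≤ L := by
      rcases le_total p.1 p.2 with hc | hc
      · rw [max_eq_right hc, min_eq_left hc, Nat.cast_sub hc]; linarith
      · rw [max_eq_left hc, min_eq_right hc, Nat.cast_sub hc]; linarith
    have := Nat.le_floor h'
    omega
  have hpair : ∀ p ∈ M, |f p.1 - f p.2| =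
      ∑ k ∈ Finset.Ico 1 n,
        if k ∈ Finset.Ico (min p.1 p.2) (max p.1 p.2) then f k - f (k + 1) else 0 := by
    intro p hp
    obtain ⟨h1, h2, -⟩ := hmem p hp
    rw [Finset.mem_Icc] at h1 h2
    have hsub : Finset.Ico (min p.1 p.2) (max p.1 p.2) ⊆ Finset.Ico 1 n :=
      Finset.Ico_subset_Ico (by omega) (by omega)
    rw [Finset.sum_ite_mem, Finset.inter_eq_right.2 hsub, sum_drop f (by omega)]
    rcases le_total p.1 p.2 with hc | hc
    · rw [max_eq_right hc, min_eq_left hc]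
      exact abs_of_nonneg (sub_nonneg.2 (hf _ _ h1.1 hc h2.2))
    · rw [max_eq_left hc, min_eq_right hc, abs_sub_comm]
      exact abs_of_nonneg (sub_nonneg.2 (hf _ _ h2.1 hc h1.2))
  have hdrop : ∑ k ∈ Finset.Ico 1 n, (f k - f (k + 1)) ≤ |f n - f 1| := by
    rcases Nat.eq_zero_or_pos n with rfl | hn
    · simp
    · rw [sum_drop f hn, abs_sub_comm]
      exact le_abs_self _
  calc |∑ p ∈ M, (f p.1 - f p.2)| ≤ ∑ p ∈ M, |f p.1 - f p.2| := Finset.abs_sum_le_sum_abs _ _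
    _ = ∑ k ∈ Finset.Ico 1 n, ∑ p ∈ M,
        (if k ∈ Finset.Ico (min p.1 p.2) (max p.1 p.2) then f k - f (k + 1) else 0) := by
      rw [Finset.sum_congr rfl hpair, Finset.sum_comm]
    _ ≤ ∑ k ∈ Finset.Ico 1 n, L * (f k - f (k + 1)) := by
      refine Finset.sum_le_sum fun k hk => ?_
      rw [Finset.mem_Ico] at hk
      have hd : 0 ≤ f k - f (k + 1) := sub_nonneg.2 (hf _ _ hk.1 (by omega) (by omega))
      rw [← Finset.sum_filter, Finset.sum_const, nsmul_eq_mul]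
      refine mul_le_mul_of_nonneg_right ?_ hd
      exact (Nat.cast_le.2 (card_straddle_le n _ k M hmem hperf hl)).trans (Nat.floor_le hL.le)
    _ = L * ∑ k ∈ Finset.Ico 1 n, (f k - f (k + 1)) := (Finset.mul_sum _ _ _).symm
    _ ≤ L * |f n - f 1| := mul_le_mul_of_nonneg_left hdrop hL.le
end

section
/- For all constants κ > 0, B > 0 and D ≥ 1 there exist a constant c' > 0 and n₀ such that the following holds for all n ≥ n₀. Let G be an n-vertex graph with degree sequence (d_v)_{v∈[n]} and average degree d̄ satisfying 1 ≤ d̄ ≤ D, and suppose Σ_{v∈[n]} d_v^{1+κ} ≤ B·n·d̄^{1+κ}. Then q*(G) ≥ c'·d̄^{−1/2}. -/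
/-!
Since `1 ≤ dbar ≤ D`, it suffices to bound the modularity below by a positive constant. The
partition used consists of the edges of a matching together with singletons.

* The moment hypothesis says that vertices of degree above a large constant `K` carry at most
  half of the edges (`sum_high_le`). A maximal matching among the remaining vertices, together
  with the high-degree vertices, covers all edges, so it saturates a set of at least `m / (2K)`
  vertices (`exists_maximal_matching`, `card_edgeFinset_le_of_cover`). The edge contribution is
  therefore at least `1 / (4K)`.
* The moment hypothesis also bounds the maximum degree by `Δ = O(n ^ (1 / (1 + κ))) = o(n)`.
  Parts have at most two vertices, so the degree tax is at most `Δ / m = o(1)`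
  (`score_lower_bound`).
-/


open Finset

/-- `σ` encodes a matching of `G` inside the vertex set `L`: it is an involution exchanging
matched vertices and fixing the unmatched ones. -/
def IsMatchingPerm {V : Type*} (G : SimpleGraph V) (L : Set V) (σ : Equiv.Perm V) : Prop :=
  ∀ v, σ (σ v) = v ∧ (σ v ≠ v → G.Adj v (σ v) ∧ v ∈ L)

/-- A matching with the largest support leaves no edge inside `L` with both ends unmatched. -/
lemma exists_maximal_matching {V : Type*} [Fintype V] [DecidableEq V]
    (G : SimpleGraph V) (L : Set V) :
    ∃ σ : Equiv.Perm V, IsMatchingPerm G L σ ∧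
      ∀ u v, G.Adj u v → u ∈ L → v ∈ L → σ u ≠ u ∨ σ v ≠ v := by
  classical
  obtain ⟨σ, hσ, hmax⟩ := Finset.exists_max_image
    (Finset.univ.filter (fun σ : Equiv.Perm V => IsMatchingPerm G L σ))
    (fun σ => σ.support.card) ⟨1, Finset.mem_filter.2 ⟨Finset.mem_univ _, fun v => by simp⟩⟩
  simp only [Finset.mem_filter, Finset.mem_univ, true_and] at hσ hmax
  refine ⟨σ, hσ, fun u v huv hu hv => ?_⟩
  by_contra! hcon
  obtain ⟨h1, h2⟩ := hcon
  have hne : u ≠ v := huv.ne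
  have hdisj : (Equiv.swap u v).Disjoint σ := by
    intro x
    by_cases hxu : x = u
    · subst hxu; exact Or.inr h1
    by_cases hxv : x = v
    · subst hxv; exact Or.inr h2
    · exact Or.inl (Equiv.swap_apply_of_ne_of_ne hxu hxv)
  have hcard := hdisj.card_support_mul
  rw [Equiv.Perm.card_support_swap hne] at hcard
  have := hmax (Equiv.swap u v * σ) (by
    intro x
    by_cases hxu : x = u
    · subst hxu
      simp [h1, h2, huv, hu]
    by_cases hxv : x = v
    · subst hxv
      simp [h1, h2, huv.symm, hv]
    · have h3 : σ x ≠ u := fun h => hxu (by rw [← (hσ x).1, h, h1])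
      have h4 : σ x ≠ v := fun h => hxv (by rw [← (hσ x).1, h, h2])
      have h5 : Equiv.swap u v (σ x) = σ x := Equiv.swap_apply_of_ne_of_ne h3 h4
      simp only [Equiv.Perm.mul_apply, h5, (hσ x).1]
      exact ⟨Equiv.swap_apply_of_ne_of_ne hxu hxv, (hσ x).2⟩)
  omega

/-- The edges are at most as many as the degree sum over any vertex cover. -/
lemma card_edgeFinset_le_of_cover {V : Type*} [Fintype V] [DecidableEq V]
    (G : SimpleGraph V) [DecidableRel G.Adj] (T : Finset V)
    (hT : ∀ u v, G.Adj u v → u ∈ T ∨ v ∈ T) :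
    G.edgeFinset.card ≤ ∑ v ∈ T, G.degree v := by
  have hsub : G.edgeFinset ⊆ T.biUnion (fun v => G.incidenceFinset v) := by
    intro e he
    induction e with
    | _ u v =>
      have huv : G.Adj u v := by simpa using he
      simp only [Finset.mem_biUnion, SimpleGraph.mem_incidenceFinset]
      rcases hT u v huv with h | h
      · exact ⟨u, h, by simpa [SimpleGraph.mk'_mem_incidenceSet_iff] using huv⟩
      · exact ⟨v, h, by simpa [SimpleGraph.mk'_mem_incidenceSet_iff] using huv⟩
  calc G.edgeFinset.card ≤ _ := Finset.card_le_card hsub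
    _ ≤ ∑ v ∈ T, (G.incidenceFinset v).card := Finset.card_biUnion_le
    _ = _ := by simp

/-- Summing over the parts of a partition and then over each part is summing over all vertices. -/
lemma sum_parts_sum {V : Type*} [Fintype V] [DecidableEq V]
    (P : Finpartition (Finset.univ : Finset V)) (f : V → ℝ) :
    ∑ A ∈ P.parts, ∑ v ∈ A, f v = ∑ v, f v := by
  have h := Finset.sum_biUnion (f := f) P.supIndep.pairwiseDisjoint
  rw [P.biUnion_parts] at h
  exact h.symm

/-- The orbits of a matching involution form a partition into matched pairs and singletons. -/
lemma exists_partition_of_involution {V : Type*} [Fintype V] [DecidableEq V]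
    (σ : Equiv.Perm V) (hσ : ∀ v, σ (σ v) = v) :
    ∃ P : Finpartition (Finset.univ : Finset V),
      ∀ A ∈ P.parts, A.card ≤ 2 ∧ ∀ v ∈ A, σ v ∈ A := by
  let r : Setoid V :=
    { r := fun u v => v = u ∨ v = σ u
      iseqv :=
        { refl := fun _ => Or.inl rfl
          symm := by
            rintro x y (rfl | rfl)
            · exact Or.inl rfl
            · exact Or.inr (hσ x).symm
          trans := by
            rintro x y z (rfl | rfl) (rfl | rfl)
            · exact Or.inl rfl
            · exact Or.inr rfl
            · exact Or.inr rfl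
            · exact Or.inl (hσ x) } }
  let _ : DecidableRel r.r := fun u v => inferInstanceAs (Decidable (v = u ∨ v = σ u))
  refine ⟨Finpartition.ofSetoid r, fun A hA => ?_⟩
  obtain ⟨a, -, rfl⟩ : ∃ a, a ∈ (Finset.univ : Finset V) ∧ ({a, σ a} : Finset V) = A := by
    obtain ⟨a, ha⟩ := (Finpartition.ofSetoid r).nonempty_of_mem_parts hA
    refine ⟨a, Finset.mem_univ a, ?_⟩
    rw [← (Finpartition.ofSetoid r).part_eq_of_mem hA ha]
    ext b
    rw [Finpartition.mem_part_ofSetoid_iff_rel, Finset.mem_insert, Finset.mem_singleton]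
    rfl
  refine ⟨Finset.card_le_two, fun v hv => ?_⟩
  rw [Finset.mem_insert, Finset.mem_singleton] at hv ⊢
  rcases hv with rfl | rfl
  · exact Or.inr rfl
  · exact Or.inl (hσ a)

/-- Contribution of a matching to the modularity: half the number of matched vertices, divided
by `m`, minus a degree tax of at most `Δ / m`. -/
lemma score_lower_bound {V : Type*} [Fintype V] [DecidableEq V]
    (G : SimpleGraph V) [DecidableRel G.Adj] (L : Set V) (σ : Equiv.Perm V)
    (hσ : IsMatchingPerm G L σ) (Δ : ℝ) (hΔ : ∀ v, (G.degree v : ℝ) ≤ Δ)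
    (hm : 0 < (G.edgeFinset.card : ℝ)) :
    (σ.support.card : ℝ) / 2 / G.edgeFinset.card - Δ / G.edgeFinset.card ≤ modularity G := by
  obtain ⟨P, hP⟩ := exists_partition_of_involution σ (fun v => (hσ v).1)
  have hbdd : BddAbove (Set.range (fun P : Finpartition (Finset.univ : Finset V) =>
      modularityScore G P)) := (Set.finite_range _).bddAbove
  refine le_trans ?_ (le_ciSup hbdd P)
  set m : ℝ := (G.edgeFinset.card : ℝ) with hmdef
  have hedge : ∀ A ∈ P.parts, (∑ v ∈ A, if σ v ≠ v then (1 : ℝ) else 0) / 2 ≤ edgeCount G A := by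
    intro A hA
    unfold edgeCount
    rw [← Finset.sum_filter, Finset.sum_const, nsmul_eq_mul, mul_one]
    gcongr
    refine Finset.card_le_card_of_injOn (fun v => (v, σ v)) ?_ ?_
    · intro v hv
      simp only [Finset.coe_filter, Set.mem_ofPred_eq] at hv
      simp only [Finset.coe_filter, Set.mem_ofPred_eq, Finset.mem_univ, true_and]
      exact ⟨((hσ v).2 hv.2).1, hv.1, (hP A hA).2 v hv.1⟩
    · intro u _ v _ h
      exact (Prod.mk.inj h).1
  have hsupp : ∑ A ∈ P.parts, (∑ v ∈ A, if σ v ≠ v then (1 : ℝ) else 0) = σ.support.card := by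
    rw [sum_parts_sum, ← Finset.sum_filter, Finset.sum_const, nsmul_eq_mul, mul_one]
    rfl
  have hvol0 : ∀ A, 0 ≤ vol G A := fun A => Finset.sum_nonneg (fun v _ => Nat.cast_nonneg _)
  have hvol : ∀ A ∈ P.parts, vol G A ≤ 2 * Δ := by
    intro A hA
    obtain ⟨a, -⟩ := P.nonempty_of_mem_parts hA
    have hΔ0 : 0 ≤ Δ := le_trans (Nat.cast_nonneg _) (hΔ a)
    have h2 : (A.card : ℝ) ≤ 2 := by exact_mod_cast (hP A hA).1
    calc vol G A ≤ ∑ v ∈ A, Δ := Finset.sum_le_sum (fun v _ => hΔ v)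
      _ = A.card * Δ := by rw [Finset.sum_const, nsmul_eq_mul]
      _ ≤ 2 * Δ := by gcongr
  have hvsum : ∑ A ∈ P.parts, vol G A = 2 * m := by
    unfold vol
    rw [sum_parts_sum, hmdef]
    exact_mod_cast G.sum_degrees_eq_twice_card_edges
  have htax : ∑ A ∈ P.parts, (vol G A / (2 * m)) ^ 2 ≤ Δ / m := by
    calc ∑ A ∈ P.parts, (vol G A / (2 * m)) ^ 2
        ≤ ∑ A ∈ P.parts, (2 * Δ) / (2 * m) ^ 2 * vol G A := by
          refine Finset.sum_le_sum (fun A hA => ?_)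
          rw [div_pow, div_mul_eq_mul_div, sq (vol G A)]
          gcongr
          · exact hvol0 A
          · exact hvol A hA
      _ = Δ / m := by
          rw [← Finset.mul_sum, hvsum]
          field_simp
  have hcov : (σ.support.card : ℝ) / 2 / m ≤ ∑ A ∈ P.parts, edgeCount G A / m := by
    rw [← hsupp, Finset.sum_div, Finset.sum_div]
    exact Finset.sum_le_sum (fun A hA => by gcongr; exact hedge A hA)
  unfold modularityScore
  rw [Finset.sum_sub_distrib]
  linarith

/-- Markov-type bound: the `(1 + κ)`-th moment controls the volume of the vertices of degree
above `K`. -/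
lemma sum_high_le {V : Type*} [Fintype V] (d : V → ℝ) (κ K M : ℝ) (hκ : 0 < κ) (hK : 1 ≤ K)
    (hd : ∀ v, 0 ≤ d v) (hM : ∑ v, d v ^ (1 + κ) ≤ M) (T : Finset V) (hT : ∀ v ∈ T, K < d v) :
    K ^ κ * ∑ v ∈ T, d v ≤ M := by
  rw [Finset.mul_sum]
  calc ∑ v ∈ T, K ^ κ * d v ≤ ∑ v ∈ T, d v ^ (1 + κ) := by
        refine Finset.sum_le_sum (fun v hv => ?_)
        have h := hT v hv
        have h0 : 0 < d v := by linarith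
        rw [Real.rpow_add h0, Real.rpow_one, mul_comm]
        gcongr
    _ ≤ ∑ v, d v ^ (1 + κ) := Finset.sum_le_sum_of_subset_of_nonneg (Finset.subset_univ T)
        (fun v _ _ => Real.rpow_nonneg (hd v) _)
    _ ≤ M := hM

/-- The bound `Δ = (C n) ^ (1 / (1 + κ))` on the maximum degree is `o(n)`. -/
lemma exists_maxDegree_small (κ C ε : ℝ) (hκ : 0 < κ) (hC : 0 < C) (hε : 0 < ε) :
    ∃ n₀ : ℕ, 0 < n₀ ∧ ∀ n : ℕ, n₀ ≤ n → (C * n) ^ (1 / (1 + κ)) ≤ ε * n := by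
  have hexp : 0 < 1 - 1 / (1 + κ) := by
    have : 1 / (1 + κ) < 1 := by rw [div_lt_one (by linarith)]; linarith
    linarith
  have ht : Filter.Tendsto (fun n : ℕ => (n : ℝ) ^ (1 - 1 / (1 + κ))) Filter.atTop Filter.atTop :=
    (tendsto_rpow_atTop hexp).comp tendsto_natCast_atTop_atTop
  obtain ⟨N, hN⟩ := Filter.eventually_atTop.1
    (ht.eventually_ge_atTop (C ^ (1 / (1 + κ)) / ε))
  refine ⟨max N 1, by simp, fun n hn => ?_⟩
  have hn0 : (0 : ℝ) < n := by
    have : 1 ≤ n := le_trans (le_max_right _ _) hn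
    exact_mod_cast this
  have h := hN n (le_trans (le_max_left _ _) hn)
  rw [div_le_iff₀ hε] at h
  calc (C * n) ^ (1 / (1 + κ)) = C ^ (1 / (1 + κ)) * (n : ℝ) ^ (1 / (1 + κ)) :=
        Real.mul_rpow hC.le hn0.le
    _ ≤ ((n : ℝ) ^ (1 - 1 / (1 + κ)) * ε) * (n : ℝ) ^ (1 / (1 + κ)) := by gcongr
    _ = ε * ((n : ℝ) ^ (1 - 1 / (1 + κ)) * (n : ℝ) ^ (1 / (1 + κ))) := by ring
    _ = ε * n := by rw [← Real.rpow_add hn0, sub_add_cancel, Real.rpow_one]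

/-- Graphs whose degree sequence has bounded `(1+κ)`-th moment have modularity
`Ω(dbar^{-1/2})`. -/
theorem modularity_moment_bound (κ B D : ℝ) (hκ : 0 < κ) (hB : 0 < B) (hD : 1 ≤ D) :
    ∃ c' : ℝ, 0 < c' ∧ ∃ n₀ : ℕ, ∀ n : ℕ, n₀ ≤ n →
      ∀ (V : Type) [Fintype V] [DecidableEq V] (G : SimpleGraph V) [DecidableRel G.Adj],
        Fintype.card V = n →
        ∀ dbar : ℝ, dbar = 2 * (G.edgeFinset.card : ℝ) / n → 1 ≤ dbar → dbar ≤ D →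
        (∑ v : V, (G.degree v : ℝ) ^ (1 + κ)) ≤ B * n * dbar ^ (1 + κ) →
        modularity G ≥ c' * dbar ^ (-(1 : ℝ) / 2) := by
  have hCpos : 0 < B * D ^ (1 + κ) := by positivity
  set C : ℝ := B * D ^ (1 + κ) with hCdef
  -- `4 * C ≤ K ^ κ` makes the volume above degree `K` at most `n / 4 ≤ m / 2`.
  obtain ⟨K, hK1, hKC⟩ : ∃ K : ℝ, 1 ≤ K ∧ 4 * C ≤ K ^ κ :=
    (((Filter.eventually_ge_atTop 1).and
      ((tendsto_rpow_atTop hκ).eventually_ge_atTop (4 * C)))).exists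
  have hK0 : 0 < K := by linarith
  -- With `m ≥ n / 2`, this choice makes the tax at most half of the edge contribution `1 / (4K)`.
  obtain ⟨n₀, hn₀, hΔ⟩ := exists_maxDegree_small κ C (1 / (16 * K)) hκ hCpos (by positivity)
  refine ⟨1 / (8 * K), by positivity, n₀, ?_⟩
  intro n hn V _ _ G _ hV dbar hdbar h1 hdD hmom
  have hn0 : (0 : ℝ) < n := by exact_mod_cast lt_of_lt_of_le hn₀ hn
  set m : ℝ := (G.edgeFinset.card : ℝ) with hmdef
  have hmn : (n : ℝ) ≤ 2 * m := by
    rw [hdbar, le_div_iff₀ hn0] at h1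
    linarith
  have hm : 0 < m := by linarith
  have hmomC : ∑ v : V, (G.degree v : ℝ) ^ (1 + κ) ≤ C * n := by
    calc _ ≤ B * n * dbar ^ (1 + κ) := hmom
      _ ≤ B * n * D ^ (1 + κ) := by gcongr
      _ = C * n := by rw [hCdef]; ring
  have hdeg : ∀ v, (G.degree v : ℝ) ≤ (C * n) ^ (1 / (1 + κ)) := by
    intro v
    have hv : (G.degree v : ℝ) ^ (1 + κ) ≤ C * n :=
      (Finset.single_le_sum (f := fun v => (G.degree v : ℝ) ^ (1 + κ))
        (fun _ _ => by positivity) (Finset.mem_univ v)).trans hmomC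
    rw [one_div, Real.le_rpow_inv_iff_of_pos (by positivity) (by positivity) (by linarith)]
    exact hv
  obtain ⟨σ, hσ, hmax⟩ := exists_maximal_matching G {v | (G.degree v : ℝ) ≤ K}
  classical
  set H : Finset V := Finset.univ.filter (fun v => K < (G.degree v : ℝ)) with hH
  have hhigh : ∑ v ∈ H, (G.degree v : ℝ) ≤ n / 4 := by
    have h := sum_high_le (fun v => (G.degree v : ℝ)) κ K (C * n) hκ hK1
      (fun v => Nat.cast_nonneg _) hmomC H (by simp [hH])
    have h0 : 0 ≤ ∑ v ∈ H, (G.degree v : ℝ) := Finset.sum_nonneg (fun v _ => Nat.cast_nonneg _)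
    have h2 := (mul_le_mul_of_nonneg_right hKC h0).trans h
    refine le_of_mul_le_mul_left ?_ hCpos
    linarith
  have hcover : m ≤ ∑ v ∈ H ∪ σ.support, (G.degree v : ℝ) := by
    have h := card_edgeFinset_le_of_cover G (H ∪ σ.support) (by
      intro u v huv
      simp only [hH, Finset.mem_union, Finset.mem_filter, Finset.mem_univ, true_and,
        Equiv.Perm.mem_support]
      by_cases hu : K < (G.degree u : ℝ)
      · exact Or.inl (Or.inl hu)
      by_cases hv : K < (G.degree v : ℝ)
      · exact Or.inr (Or.inl hv)
      exact (hmax u v huv (not_lt.1 hu) (not_lt.1 hv)).imp Or.inr Or.inr)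
    rw [hmdef]
    exact_mod_cast h
  have hsupp : ∑ v ∈ σ.support, (G.degree v : ℝ) ≤ σ.support.card * K := by
    rw [← nsmul_eq_mul]
    refine Finset.sum_le_card_nsmul _ _ _ (fun v hv => ?_)
    exact ((hσ v).2 (Equiv.Perm.mem_support.1 hv)).2
  have hunion : ∑ v ∈ H ∪ σ.support, (G.degree v : ℝ)
      ≤ ∑ v ∈ H, (G.degree v : ℝ) + ∑ v ∈ σ.support, (G.degree v : ℝ) := by
    rw [← Finset.sum_union_inter]
    exact le_add_of_nonneg_right (Finset.sum_nonneg (fun v _ => Nat.cast_nonneg _))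
  have hcov : 1 / (4 * K) ≤ (σ.support.card : ℝ) / 2 / m := by
    rw [div_div, div_le_div_iff₀ (by positivity) (by positivity)]
    linarith
  have htax : (C * n) ^ (1 / (1 + κ)) / m ≤ 1 / (8 * K) := by
    rw [div_le_iff₀ hm]
    calc _ ≤ 1 / (16 * K) * n := hΔ n hn
      _ ≤ 1 / (16 * K) * (2 * m) := by gcongr
      _ = 1 / (8 * K) * m := by field_simp; norm_num
  have hscore := score_lower_bound G _ σ hσ _ hdeg hm
  have hpow : dbar ^ (-(1 : ℝ) / 2) ≤ 1 :=
    Real.rpow_le_one_of_one_le_of_nonpos h1 (by norm_num)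
  have hsplit : 1 / (4 * K) = 1 / (8 * K) + 1 / (8 * K) := by field_simp; norm_num
  calc 1 / (8 * K) * dbar ^ (-(1 : ℝ) / 2) ≤ 1 / (8 * K) * 1 := by gcongr
    _ ≤ modularity G := by linarith
end
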